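/- arXiv:2307.03350 — 2 statements merged into one kernel-verified Lean document; each statement's English description precedes it below -/
import Mathlib

section
/- Let p > 0, let λ be a Koshliakov sequence for p, and let x > 0. Then ∑_{n=1}^∞ w_n/(e^{λ_n² x} − 1) = 1/(4(1 + 1/(πp))) + (π²/(6x))·(1 + (3/(πp))(1 + 1/(πp)))/(1 + 1/(πp))² + (1/2)·√(π/x)·ζ(1/2) + (1/2)·√(π/x)·∑_{n=1}^∞ (1/√n)·G_p(2πn/x). -/
/-!
Write `λ_n` for the Koshliakov sequence, `w_n` for its weights and `w_0 = 1 / (1 + 1 / (π p))`.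
The numbers `0` and `±λ_n` are exactly the zeros of `kD = p sin πz + z cos πz`, all of them simple,
and `w_0`, `w_n` are the residues there of `π kN / kD`, where `kN = p cos πz - z sin πz`.

*Partial fractions.* The quotient `kN / kD` is bounded on the boundaries of the squares of integral
half-side `K`, so the maximum principle, applied to the odd function left after removing the
principal parts, shows that `π kN / kD` is the sum of its principal parts
(`KoshSeq.tendsto_remainder`). At `z = i s` this evaluates `∑ w_n / (λ_n² + s²)`
(`KoshSeq.hasSum_resolvent`). Three specialisations are needed: `s = p` gives
`∑ (1 - w_n) = w_0 / 2`; `s → 0` gives `∑ w_n / λ_n²`; and `s² = i a`, after taking real parts, gives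
`∑ w_n λ_n² / (λ_n⁴ + a²) = π / (2 √(2a)) * (1 + G_p(a))` (`KoshSeq.hasSum_kW_mul_kern`).

*Double series.* Let `b t = 1 / (e^t - 1) - 1 / t`. The partial fractions of the Bose function give
`b (x u²) + 1/2 = (2 / x) ∑_m kern a_m u`, with `kern a u = u² / (u⁴ + a²)` and
`a_m = 2π(m+1)/x`. The double series with terms
`w_n kern a_m λ_n - ∫_{n-1}^{n} kern a_m` converges absolutely, by a midpoint-rule estimate and
`λ_n = n - 1/2 + O(1/n)` (`KoshSeq.abs_term_le`). Summing over `n` first leaves the terms `G_p(a_m)`,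
since `∫_0^∞ kern a = π / (2 √(2a))`; summing over `m` first leaves `∑ w_n b(x λ_n²)`, the constant
`w_0 / 4`, and the integral `∫_0^∞ b(x u²) du = (1/2) √(π/x) ζ(1/2)`. That integral is a Mellin
transform at `1/2`, obtained by analytic continuation from the Mellin transform of `1 / (e^t + 1)`
(`integral_boseReg_sq`). Adding `(1/x) ∑ w_n / λ_n²` turns `b` back into the Bose function.
-/

/-- The explicit elementary function `G_p(a)` from Ramanujan's formula for `ζ(1/2)`
in Koshliakov's setting. -/
noncomputable def Gfun (p a : ℝ) : ℝ :=
  ((p ^ 2 - a) * (Real.cos (Real.pi * Real.sqrt (2 * a)) - Real.sin (Real.pi * Real.sqrt (2 * a)))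
      - Real.exp (-(Real.pi * Real.sqrt (2 * a))) * (p ^ 2 - Real.sqrt (2 * a) * p + a)
      - Real.sqrt (2 * a) * p *
          (Real.cos (Real.pi * Real.sqrt (2 * a)) + Real.sin (Real.pi * Real.sqrt (2 * a)))) /
    (p ^ 2 * (Real.cosh (Real.pi * Real.sqrt (2 * a)) - Real.cos (Real.pi * Real.sqrt (2 * a)))
      + Real.sqrt (2 * a) * p *
          (Real.sinh (Real.pi * Real.sqrt (2 * a)) + Real.sin (Real.pi * Real.sqrt (2 * a)))
      + a * (Real.cosh (Real.pi * Real.sqrt (2 * a)) + Real.cos (Real.pi * Real.sqrt (2 * a)))) 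

/-! ### The Mellin transform of the Bose function at `1/2` -/

open Complex Set Filter Topology MeasureTheory in
/-- The Dirichlet eta function in terms of `ζ`. -/
theorem eta_eq_zeta (s : ℂ) (hs : 1 < s.re) :
    ∑' i : ℕ, (-1 : ℂ) ^ i * (1 / ((i : ℂ) + 1) ^ s) = (1 - 2 * 2 ^ (-s)) * riemannZeta s := by
  have hsum1 : Summable fun i : ℕ ↦ 1 / ((i : ℝ) + 1) ^ s.re := by
    have := (summable_nat_add_iff 1).2 (Real.summable_one_div_nat_rpow.2 hs)
    simpa using this
  rw [zeta_eq_tsum_one_div_nat_add_one_cpow hs]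
  set a : ℕ → ℂ := fun i ↦ 1 / ((i : ℂ) + 1) ^ s with ha
  have hsa : Summable a := by
    refine Summable.of_norm_bounded hsum1 fun i ↦ le_of_eq ?_
    have : ((i : ℂ) + 1) = (((i : ℝ) + 1 : ℝ) : ℂ) := by push_cast; rfl
    rw [ha]; simp only [norm_div, norm_one]
    rw [this, norm_cpow_eq_rpow_re_of_pos (by positivity)]
  have hse : Summable fun k ↦ a (2 * k) :=
    hsa.comp_injective (mul_right_injective₀ (two_ne_zero' ℕ))
  have hso : Summable fun k ↦ a (2 * k + 1) :=
    hsa.comp_injective fun i j h ↦ by simpa using h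
  have hodd : ∑' k, a (2 * k + 1) = 2 ^ (-s) * ∑' k, a k := by
    rw [← tsum_mul_left]
    refine tsum_congr fun k ↦ ?_
    simp only [ha]
    have : (((2 * k + 1 : ℕ) : ℂ) + 1) = ((2 : ℝ) : ℂ) * (((k : ℝ) + 1 : ℝ) : ℂ) := by
      push_cast; ring
    rw [this, mul_cpow_ofReal_nonneg (by norm_num) (by positivity), cpow_neg]
    push_cast
    field_simp
  have e1 : Summable fun k ↦ (-1 : ℂ) ^ (2 * k) * a (2 * k) := by simpa using hse
  have e2 : Summable fun k ↦ (-1 : ℂ) ^ (2 * k + 1) * a (2 * k + 1) := by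
    simpa [pow_succ] using hso.neg
  change ∑' i, (-1 : ℂ) ^ i * a i = (1 - 2 * 2 ^ (-s)) * ∑' k, a k
  rw [← tsum_even_add_odd (f := fun i ↦ (-1 : ℂ) ^ i * a i) e1 e2]
  have e3 := tsum_even_add_odd hse hso
  have e4 : ∑' k, (-1 : ℂ) ^ (2 * k) * a (2 * k) = ∑' k, a (2 * k) := by simp
  have e5 : ∑' k, (-1 : ℂ) ^ (2 * k + 1) * a (2 * k + 1) = - ∑' k, a (2 * k + 1) := by
    rw [← tsum_neg]; simp [pow_succ]
  rw [e4, e5, hodd]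
  rw [hodd] at e3
  linear_combination e3

open Complex Set Filter Topology MeasureTheory in
/-- The Mellin transform of `1 / (e^t + 1)` at `s = 1/2`, obtained from the region `1 < re s` by the
identity theorem. The convex domain `0 < re s < 1 + im s` joins the two while avoiding the
pole of `ζ` at `1`. -/
theorem mellin_fermi_half :
    mellin (fun t : ℝ ↦ ((1 / (Real.exp t + 1) : ℝ) : ℂ)) (1 / 2) =
      (1 - 2 * 2 ^ (-(1 / 2 : ℂ))) * (Gamma (1 / 2) * riemannZeta (1 / 2)) := by
  set f : ℝ → ℂ := fun t ↦ ((1 / (Real.exp t + 1) : ℝ) : ℂ) with hf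
  have hpos (t : ℝ) : 0 < Real.exp t + 1 := by positivity
  have hfcont : Continuous f := by
    refine continuous_ofReal.comp ?_
    exact continuous_const.div (by fun_prop) fun t ↦ (hpos t).ne'
  have hright (s : ℂ) (hs : 1 < s.re) :
      mellin f s = (1 - 2 * 2 ^ (-s)) * (Gamma s * riemannZeta s) := by
    have hgeom : ∀ t ∈ Ioi (0 : ℝ),
        HasSum (fun i : ℕ ↦ (-1 : ℂ) ^ i * Real.exp (-((i : ℝ) + 1) * t)) (f t) := by
      intro t ht
      have ht : 0 < t := ht
      have h1 : Real.exp (-t) < 1 := by simpa using ht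
      have h0 : |-Real.exp (-t)| < 1 := by rwa [abs_neg, abs_of_pos (Real.exp_pos _)]
      have := (hasSum_geometric_of_abs_lt_one h0).mul_left (Real.exp (-t))
      have h2 : f t = ((Real.exp (-t) * (1 - -Real.exp (-t))⁻¹ : ℝ) : ℂ) := by
        simp only [hf]
        congr 1
        have := (Real.exp_pos t).ne'
        have h3 := (hpos t).ne'
        rw [Real.exp_neg]
        have h5 : (1 - -(Real.exp t)⁻¹) = (Real.exp t + 1) / Real.exp t := by
          field_simp; ring
        rw [h5]
        field_simp
      rw [h2]
      have h6 := Complex.hasSum_ofReal.2 this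
      convert h6 using 2 with i
      rw [neg_pow (Real.exp (-t)), ← Real.exp_nat_mul, mul_left_comm, ← Real.exp_add]
      push_cast
      congr 2; ring_nf
    have hsum1 : Summable fun i : ℕ ↦ 1 / ((i : ℝ) + 1) ^ s.re := by
      have := (summable_nat_add_iff 1).2 (Real.summable_one_div_nat_rpow.2 hs)
      simpa using this
    have hmain := (hasSum_mellin (a := fun i : ℕ ↦ (-1) ^ i) (p := fun i : ℕ ↦ (i : ℝ) + 1)
      (F := f) (s := s) (fun i ↦ Or.inr (by positivity)) (by linarith) hgeom
      (by simpa using hsum1)).tsum_eq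
    rw [← hmain]
    have hterm (i : ℕ) : Gamma s * (-1) ^ i / (((i : ℝ) + 1 : ℝ) : ℂ) ^ s
        = Gamma s * ((-1) ^ i * (1 / ((i : ℂ) + 1) ^ s)) := by
      push_cast; ring
    simp_rw [hterm]
    rw [tsum_mul_left, eta_eq_zeta s hs]
    ring
  -- both sides are holomorphic on the convex set `U`
  set U : Set ℂ := {s | 0 < s.re} ∩ {s | s.re < 1 + s.im} with hU
  have hUo : IsOpen U :=
    (isOpen_lt continuous_const continuous_re).inter
      (isOpen_lt continuous_re (continuous_const.add continuous_im))
  have hUc : Convex ℝ U := by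
    intro z hz w hw c d hc hd hcd
    simp only [hU, mem_inter_iff, mem_ofPred_eq, add_re, add_im, real_smul, mul_re, mul_im,
      ofReal_re, ofReal_im, zero_mul, sub_zero, add_zero] at hz hw ⊢
    constructor
    · rcases hc.eq_or_lt with h | h
      · subst h; simp at hcd; subst hcd; simpa using hw.1
      · nlinarith [mul_pos h hz.1, mul_nonneg hd hw.1.le]
    · rcases hc.eq_or_lt with h | h
      · subst h; simp at hcd; subst hcd; simpa using hw.2
      · nlinarith [mul_lt_mul_of_pos_left hz.2 h, mul_le_mul_of_nonneg_left hw.2.le hd]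
  have hftop : f =O[atTop] fun t : ℝ ↦ Real.exp (-1 * t) := by
    refine Asymptotics.IsBigO.of_bound 1 (Eventually.of_forall fun t ↦ ?_)
    rw [hf]
    simp only [norm_real, Real.norm_eq_abs]
    rw [abs_of_pos (by positivity), abs_of_pos (Real.exp_pos _), one_mul, neg_one_mul,
      Real.exp_neg, ← one_div]
    exact one_div_le_one_div_of_le (Real.exp_pos _) (by linarith)
  have hfbot : f =O[𝓝[>] 0] fun t : ℝ ↦ t ^ (-(0 : ℝ)) := by
    refine Asymptotics.IsBigO.of_bound 1 (Eventually.of_forall fun t ↦ ?_)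
    rw [hf]
    simp only [norm_real, Real.norm_eq_abs, neg_zero, Real.rpow_zero, abs_one, mul_one]
    rw [abs_of_pos (by positivity), div_le_one (hpos t)]
    linarith [Real.exp_pos t]
  have hA1 : AnalyticOnNhd ℂ (mellin f) U := by
    refine DifferentiableOn.analyticOnNhd (fun s hs ↦ ?_) hUo
    exact (mellin_differentiableAt_of_isBigO_rpow_exp one_pos
      (hfcont.locallyIntegrable.locallyIntegrableOn _) hftop hfbot hs.1).differentiableWithinAt
  have hA2 : AnalyticOnNhd ℂ (fun s ↦ (1 - 2 * 2 ^ (-s)) * (Gamma s * riemannZeta s)) U := by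
    refine DifferentiableOn.analyticOnNhd (fun s hs ↦ ?_) hUo
    have h1 : s ≠ 1 := by
      rintro rfl
      simpa [hU] using hs.2
    have hG : DifferentiableAt ℂ Gamma s := differentiableAt_Gamma s fun m h ↦ by
      have := hs.1
      rw [h] at this
      simp only [mem_ofPred_eq, neg_re, natCast_re] at this
      have : (0 : ℝ) ≤ m := by positivity
      linarith
    have hZ := differentiableAt_riemannZeta h1
    have h2 : DifferentiableAt ℂ (fun s : ℂ ↦ (1 - 2 * 2 ^ (-s) : ℂ)) s := by
      refine (differentiableAt_const _).sub ((differentiableAt_const _).mul ?_)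
      exact differentiableAt_id.neg.const_cpow (Or.inl two_ne_zero)
    exact (h2.mul (hG.mul hZ)).differentiableWithinAt
  have hz0 : (2 + 2 * I : ℂ) ∈ U := by
    constructor <;> simp
  have heq : mellin f =ᶠ[𝓝 (2 + 2 * I)]
      (fun s ↦ (1 - 2 * 2 ^ (-s)) * (Gamma s * riemannZeta s)) := by
    have : {s : ℂ | 1 < s.re} ∈ 𝓝 (2 + 2 * I : ℂ) :=
      (isOpen_lt continuous_const continuous_re).mem_nhds (by simp)
    filter_upwards [this] with s hs using hright s hs
  refine hA1.eqOn_of_preconnected_of_eventuallyEq hA2 hUc.isPreconnected hz0 heq ?_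
  constructor
  · simp
  · simp; norm_num

/-- The regularised Bose function `1 / (e^t - 1) - 1 / t`. -/
noncomputable def boseReg (t : ℝ) : ℝ := 1 / (Real.exp t - 1) - 1 / t

theorem boseReg_nonpos {t : ℝ} (ht : 0 < t) : boseReg t ≤ 0 := by
  have h1 := Real.add_one_le_exp t
  have := one_div_le_one_div_of_le ht (show t ≤ Real.exp t - 1 by linarith)
  unfold boseReg; linarith

theorem abs_boseReg_le_inv {t : ℝ} (ht : 0 < t) : |boseReg t| ≤ 1 / t := by
  have h1 := Real.add_one_le_exp t
  rw [abs_of_nonpos (boseReg_nonpos ht)]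
  have : 0 ≤ 1 / (Real.exp t - 1) := one_div_nonneg.2 (by linarith)
  unfold boseReg; linarith

theorem abs_boseReg_le_one {t : ℝ} (ht : 0 < t) : |boseReg t| ≤ 1 := by
  have h1 := Real.add_one_lt_exp ht.ne'
  have h2 := Real.add_one_le_exp (-t)
  have h3 : Real.exp t * Real.exp (-t) = 1 := by rw [← Real.exp_add]; simp
  rw [abs_of_nonpos (boseReg_nonpos ht)]
  have h4 : 1 / t ≤ 1 + 1 / (Real.exp t - 1) := by
    have h5 : 1 + 1 / (Real.exp t - 1) = Real.exp t / (Real.exp t - 1) := by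
      have : Real.exp t - 1 ≠ 0 := by linarith
      field_simp; ring
    rw [h5, div_le_div_iff₀ ht (by linarith)]
    nlinarith [Real.exp_pos t]
  unfold boseReg; linarith

theorem continuousOn_boseReg : ContinuousOn boseReg (Set.Ioi 0) := by
  unfold boseReg
  refine ContinuousOn.sub (continuousOn_const.div (by fun_prop) fun t ht ↦ ?_)
    (continuousOn_const.div continuousOn_id fun t ht ↦ (ne_of_gt ht))
  have : (0 : ℝ) < t := ht
  have h1 := Real.add_one_lt_exp this.ne'
  linarith

open Complex Set Filter Topology MeasureTheory in
theorem hasMellin_boseReg_half :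
    HasMellin (fun t : ℝ ↦ ((boseReg t : ℝ) : ℂ)) (1 / 2)
      (Gamma (1 / 2) * riemannZeta (1 / 2)) := by
  have hconv : MellinConvergent (fun t : ℝ ↦ ((boseReg t : ℝ) : ℂ)) (1 / 2) := by
    refine mellinConvergent_of_isBigO_rpow (a := 1) (b := 0) ?_ ?_ ?_ ?_ ?_
    · exact (continuous_ofReal.comp_continuousOn continuousOn_boseReg).locallyIntegrableOn
        measurableSet_Ioi
    · refine Asymptotics.IsBigO.of_bound 1 ?_
      filter_upwards [eventually_gt_atTop 0] with t ht
      simp only [norm_real, Real.norm_eq_abs, Real.rpow_neg_one, one_mul]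
      rw [abs_of_pos (inv_pos.2 ht), ← one_div]
      exact abs_boseReg_le_inv ht
    · norm_num
    · refine Asymptotics.IsBigO.of_bound 1 ?_
      filter_upwards [self_mem_nhdsWithin] with t ht
      simpa using abs_boseReg_le_one ht
    · norm_num
  refine ⟨hconv, ?_⟩
  have hconv2 := (MellinConvergent.comp_mul_left (two_pos : (0 : ℝ) < 2)).2 hconv
  have h1 := (hasMellin_sub hconv ((hasMellin_const_smul hconv2 (2 : ℂ)).1)).2
  rw [(hasMellin_const_smul hconv2 (2 : ℂ)).2, 
    mellin_comp_mul_left (fun t : ℝ ↦ ((boseReg t : ℝ) : ℂ)) _ two_pos] at h1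
  have h2 : mellin (fun t : ℝ ↦ ((boseReg t : ℝ) : ℂ) - (2 : ℂ) • ((boseReg (2 * t) : ℝ) : ℂ))
      (1 / 2) = mellin (fun t : ℝ ↦ ((1 / (Real.exp t + 1) : ℝ) : ℂ)) (1 / 2) := by
    refine setIntegral_congr_fun measurableSet_Ioi fun t ht ↦ ?_
    have ht : 0 < t := ht
    have e1 := Real.add_one_lt_exp ht.ne'
    have e2 : boseReg t - 2 * boseReg (2 * t) = 1 / (Real.exp t + 1) := by
      unfold boseReg
      have e3 : Real.exp (2 * t) - 1 = (Real.exp t - 1) * (Real.exp t + 1) := by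
        rw [two_mul, Real.exp_add]; ring
      rw [e3]
      have e4 : Real.exp t - 1 ≠ 0 := by linarith
      have e5 : Real.exp t + 1 ≠ 0 := by positivity
      field_simp
      ring
    simp only [← e2]
    push_cast
    rfl
  rw [h2, mellin_fermi_half] at h1
  simp only [smul_eq_mul, ofReal_ofNat] at h1
  have hne : (1 - 2 * 2 ^ (-(1 / 2 : ℂ)) : ℂ) ≠ 0 := by
    have e1 : (2 : ℂ) ^ (-(1 / 2 : ℂ)) = (((2 : ℝ) ^ (-(1 / 2) : ℝ) : ℝ) : ℂ) := by
      rw [ofReal_cpow (by norm_num)]; norm_num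
    rw [e1, Real.rpow_neg (by norm_num), ← Real.sqrt_eq_rpow]
    intro h
    have h' : (1 - 2 * (Real.sqrt 2)⁻¹ : ℝ) = 0 := by exact_mod_cast h
    have hs : 0 < Real.sqrt 2 := by positivity
    have h3 : Real.sqrt 2 = 2 := by field_simp at h'; linarith
    have h4 := Real.sq_sqrt (show (0 : ℝ) ≤ 2 by norm_num)
    rw [h3] at h4; norm_num at h4
  refine mul_left_cancel₀ hne ?_
  rw [h1]; ring

open Complex Set Filter Topology MeasureTheory in
/-- The integral which produces the term `ζ(1/2)`. -/
theorem integral_boseReg_sq {x : ℝ} (hx : 0 < x) :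
    IntegrableOn (fun u : ℝ ↦ boseReg (x * u ^ 2)) (Ioi 0) ∧
    ∫ u in Ioi (0 : ℝ), boseReg (x * u ^ 2) =
      1 / 2 * Real.sqrt (Real.pi / x) * (riemannZeta (1 / 2)).re := by
  constructor
  · have hc : ContinuousOn (fun u : ℝ ↦ boseReg (x * u ^ 2)) (Ioi 0) :=
      continuousOn_boseReg.comp (by fun_prop) fun u hu ↦ by
        have : (0 : ℝ) < u := hu
        exact (by positivity : 0 < x * u ^ 2)
    rw [← Ioc_union_Ioi_eq_Ioi (zero_le_one (α := ℝ))]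
    refine IntegrableOn.union ?_ ?_
    · refine (integrableOn_const (C := (1 : ℝ)) (by simp)).mono'
        ((hc.mono Ioc_subset_Ioi_self).aestronglyMeasurable measurableSet_Ioc) ?_
      refine (ae_restrict_iff' measurableSet_Ioc).2 (Eventually.of_forall fun u hu ↦ ?_)
      have := hu.1
      exact abs_boseReg_le_one (by positivity)
    · have h1 := (integrableOn_Ioi_rpow_of_lt (a := -2) (by norm_num) one_pos).const_mul (1 / x)
      refine h1.mono' ((hc.mono (Ioi_subset_Ioi zero_le_one)).aestronglyMeasurable
        measurableSet_Ioi) ?_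
      refine (ae_restrict_iff' measurableSet_Ioi).2 (Eventually.of_forall fun u hu ↦ ?_)
      have hu0 : 0 < u := lt_trans one_pos hu
      refine (abs_boseReg_le_inv (by positivity)).trans (le_of_eq ?_)
      rw [Real.rpow_neg hu0.le, Real.rpow_two]
      field_simp
  · have h1 := hasMellin_boseReg_half.2
    have h2 : mellin (fun t : ℝ ↦ ((boseReg (x * t) : ℝ) : ℂ)) (1 / 2) =
        (x : ℂ) ^ (-(1 / 2) : ℂ) • (Gamma (1 / 2) * riemannZeta (1 / 2)) := by
      rw [← h1, ← mellin_comp_mul_left _ _ hx]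
    have h3 := mellin_comp_rpow (fun t : ℝ ↦ ((boseReg (x * t) : ℝ) : ℂ)) 1 2
    have e1 : (1 : ℂ) / ((2 : ℝ) : ℂ) = 1 / 2 := by push_cast; rfl
    rw [e1, h2] at h3
    have h4 : mellin (fun t : ℝ ↦ ((boseReg (x * t ^ (2 : ℝ)) : ℝ) : ℂ)) 1 =
        ((∫ u in Ioi (0 : ℝ), boseReg (x * u ^ 2) : ℝ) : ℂ) := by
      rw [mellin, ← integral_complex_ofReal]
      simp
    rw [h4] at h3
    have h5 : (x : ℂ) ^ (-(1 / 2) : ℂ) = ((1 / Real.sqrt x : ℝ) : ℂ) := by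
      rw [Real.sqrt_eq_rpow, one_div (x ^ (_ : ℝ)), ← Real.rpow_neg hx.le, ofReal_cpow hx.le]
      norm_num
    have h6 : Gamma (1 / 2) = ((Real.sqrt Real.pi : ℝ) : ℂ) := by
      rw [← Real.Gamma_one_half_eq, ← Complex.Gamma_ofReal]; norm_num
    rw [h5, h6] at h3
    have h7 := congrArg Complex.re h3
    rw [ofReal_re] at h7
    rw [h7, Real.sqrt_div Real.pi_pos.le]
    simp only [smul_eq_mul, real_smul, re_ofReal_mul]
    norm_num
    ring

/-! ### Partial fractions of the Bose function and the kernel `u² / (u⁴ + a²)` -/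

open Complex in
/-- Partial fractions of `1 / (e^t - 1)`. -/
theorem hasSum_boseReg {t : ℝ} (ht : 0 < t) :
    HasSum (fun m : ℕ ↦ 2 * t / (t ^ 2 + 4 * Real.pi ^ 2 * ((m : ℝ) + 1) ^ 2))
      (boseReg t + 1 / 2) := by
  have hpi := Real.pi_pos
  have hpiC : (Real.pi : ℂ) ≠ 0 := by exact_mod_cast hpi.ne'
  have htC : (t : ℂ) ≠ 0 := by exact_mod_cast ht.ne'
  set z : ℂ := (t / (2 * Real.pi) : ℝ) * I with hz
  have hzm : z ∈ Complex.integerComplement := by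
    rw [Complex.mem_integerComplement_iff]
    rintro ⟨n, hn⟩
    have := congrArg Complex.im hn
    simp only [hz, intCast_im, mul_im, ofReal_re, ofReal_im, I_re, I_im] at this
    have h2 : 0 < t / (2 * Real.pi) := by positivity
    linarith
  have h1 := cot_series_rep' hzm
  have h2 : Summable fun n : ℕ ↦ (1 / (z - (n + 1)) + 1 / (z + (n + 1))) := by
    simpa [cotTerm] using summable_cotTerm hzm
  have h3 := h2.hasSum
  rw [← h1] at h3
  have h4 := h3.mul_left (I / (2 * Real.pi))
  rw [← Complex.hasSum_ofReal]
  convert! h4 using 1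
  · funext m
    have hd : ((t : ℂ) ^ 2 + 4 * (Real.pi : ℂ) ^ 2 * ((m : ℂ) + 1) ^ 2) ≠ 0 := by
      have : (t ^ 2 + 4 * Real.pi ^ 2 * ((m : ℝ) + 1) ^ 2) ≠ 0 := by positivity
      exact_mod_cast this
    have e1 : z ^ 2 = -((t : ℂ) ^ 2 / (4 * (Real.pi : ℂ) ^ 2)) := by
      rw [hz, mul_pow, I_sq]; push_cast; field_simp; ring
    have e2 : (z - (m + 1)) * (z + (m + 1)) =
        -((t : ℂ) ^ 2 + 4 * (Real.pi : ℂ) ^ 2 * ((m : ℂ) + 1) ^ 2) / (4 * (Real.pi : ℂ) ^ 2) := by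
      have : (z - (m + 1)) * (z + (m + 1)) = z ^ 2 - (m + 1) ^ 2 := by ring
      rw [this, e1]; field_simp; ring
    have e3 : (z - (m + 1)) * (z + (m + 1)) ≠ 0 := by
      rw [e2]
      exact div_ne_zero (neg_ne_zero.2 hd) (mul_ne_zero (by norm_num) (pow_ne_zero 2 hpiC))
    have e4 : 1 / (z - (m + 1)) + 1 / (z + (m + 1)) = 2 * z / ((z - (m + 1)) * (z + (m + 1))) := by
      have e5 := left_ne_zero_of_mul e3
      have e6 := right_ne_zero_of_mul e3
      field_simp; ring
    rw [e4, e2, hz]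
    push_cast
    field_simp
    linear_combination (4 : ℂ) * I_sq
  · rw [Complex.cot_pi_eq_exp_ratio]
    have e1 : 2 * Real.pi * I * z = -(t : ℂ) := by
      rw [hz]; push_cast; field_simp; linear_combination I_sq
    rw [e1, hz]
    unfold boseReg
    push_cast
    have e2 : (Complex.exp t - 1) ≠ 0 := by
      have := Real.add_one_lt_exp ht.ne'
      have : Real.exp t - 1 ≠ 0 := by linarith
      exact_mod_cast this
    rw [Complex.exp_neg]
    have e3 := Complex.exp_ne_zero t
    have e4 : (I * (1 - (Complex.exp t)⁻¹)) = I * (Complex.exp t - 1) / Complex.exp t := by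
      field_simp
    have e5 : ((Complex.exp t)⁻¹ + 1) = (Complex.exp t + 1) / Complex.exp t := by
      field_simp; ring
    rw [e5, e4]
    have hI := I_ne_zero
    field_simp
    ring

/-- The kernel `u² / (u⁴ + a²) = Re (1 / (u² + i a))`. -/
noncomputable def kern (a u : ℝ) : ℝ := u ^ 2 / (u ^ 4 + a ^ 2)

open Complex in
theorem kern_eq_re (a u : ℝ) : kern a u = (1 / ((u : ℂ) ^ 2 + a * I)).re := by
  have e : ((u : ℂ) ^ 2 + a * I) = ((u ^ 2 : ℝ) : ℂ) + (a : ℝ) * I := by push_cast; rfl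
  rw [e, one_div, inv_re, normSq_add_mul_I]
  simp only [add_re, ofReal_re, mul_re, I_re, ofReal_im, I_im, kern]
  ring_nf

open Complex in
theorem norm_quad_sq (a u : ℝ) : ‖((u : ℂ) ^ 2 + a * I)‖ ^ 2 = u ^ 4 + a ^ 2 := by
  have e : ((u : ℂ) ^ 2 + a * I) = ((u ^ 2 : ℝ) : ℂ) + (a : ℝ) * I := by push_cast; rfl
  rw [e, ← normSq_eq_norm_sq, normSq_add_mul_I]
  ring

open Complex in
theorem le_norm_quad (a u : ℝ) : a ≤ ‖((u : ℂ) ^ 2 + a * I)‖ := by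
  refine le_of_abs_le (abs_le_of_sq_le_sq ?_ (norm_nonneg _))
  rw [norm_quad_sq]; nlinarith [sq_nonneg (u ^ 2)]

open Complex in
theorem sq_le_norm_quad (a u : ℝ) : u ^ 2 ≤ ‖((u : ℂ) ^ 2 + a * I)‖ := by
  refine le_of_abs_le (abs_le_of_sq_le_sq ?_ (norm_nonneg _))
  rw [norm_quad_sq]; nlinarith [sq_nonneg a]

open Complex in
/-- Interpolating between the bounds `u²` and `a` for `|u² + i a|` gives a product bound that is
summable in both variables. -/
theorem one_div_norm_quad_le {a u : ℝ} (ha : 0 < a) (n : ℕ) (hu : ((n : ℝ) + 1) / 2 ≤ u) :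
    1 / ‖((u : ℂ) ^ 2 + a * I)‖ ≤ 4 * (1 / ((n : ℝ) + 1) ^ (3 / 2 : ℝ)) * (1 / a ^ (1 / 4 : ℝ)) := by
  set N := ‖((u : ℂ) ^ 2 + a * I)‖ with hN
  have hN0 : 0 < N := lt_of_lt_of_le ha (le_norm_quad a u)
  have hn : (0 : ℝ) < (n : ℝ) + 1 := by positivity
  have h1 : (((n : ℝ) + 1) / 2) ^ 2 ≤ N := (by gcongr : _ ≤ u ^ 2).trans (sq_le_norm_quad a u)
  have h2 : ((((n : ℝ) + 1) / 2) ^ 2) ^ (3 / 4 : ℝ) ≤ N ^ (3 / 4 : ℝ) :=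
    Real.rpow_le_rpow (by positivity) h1 (by norm_num)
  have h3 : a ^ (1 / 4 : ℝ) ≤ N ^ (1 / 4 : ℝ) :=
    Real.rpow_le_rpow ha.le (le_norm_quad a u) (by norm_num)
  have h4 : N = N ^ (3 / 4 : ℝ) * N ^ (1 / 4 : ℝ) := by
    rw [← Real.rpow_add hN0]; norm_num
  have h5 : ((((n : ℝ) + 1) / 2) ^ 2) ^ (3 / 4 : ℝ) =
      ((n : ℝ) + 1) ^ (3 / 2 : ℝ) / 2 ^ (3 / 2 : ℝ) := by
    rw [← Real.div_rpow hn.le (by norm_num), ← Real.rpow_natCast, ← Real.rpow_mul (by positivity)]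
    norm_num
  have h6 : (2 : ℝ) ^ (3 / 2 : ℝ) ≤ 4 := by
    calc (2 : ℝ) ^ (3 / 2 : ℝ) ≤ 2 ^ (2 : ℝ) :=
          Real.rpow_le_rpow_of_exponent_le (by norm_num) (by norm_num)
      _ = 4 := by norm_num
  have h7 : ((n : ℝ) + 1) ^ (3 / 2 : ℝ) / 4 * a ^ (1 / 4 : ℝ) ≤ N := by
    rw [h4]
    refine mul_le_mul (le_trans ?_ h2) h3 (by positivity) (by positivity)
    rw [h5]; gcongr
  calc 1 / N ≤ 1 / (((n : ℝ) + 1) ^ (3 / 2 : ℝ) / 4 * a ^ (1 / 4 : ℝ)) :=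
        one_div_le_one_div_of_le (by positivity) h7
    _ = _ := by field_simp

theorem continuous_kern {a : ℝ} (ha : 0 < a) : Continuous (kern a) := by
  unfold kern
  exact (by fun_prop : Continuous fun u : ℝ ↦ u ^ 2).div (by fun_prop) fun u ↦ by positivity

open Complex in
/-- Second-order Taylor bound for the kernel. -/
theorem abs_kern_taylor {a c t : ℝ} (ha : 0 < a) (hc : 1 / 2 ≤ c) (ht : |t| ≤ 1 / 2) :
    |kern a (c + t) - kern a c - t * (-2 * c / ((c : ℂ) ^ 2 + a * I) ^ 2).re| ≤
      7 / (a * ‖((c : ℂ) ^ 2 + a * I)‖) := by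
  set q : ℂ := (c : ℂ) ^ 2 + a * I with hq
  set r : ℂ := ((c + t : ℝ) : ℂ) ^ 2 + a * I with hr
  have hqn : 0 < ‖q‖ := lt_of_lt_of_le ha (le_norm_quad a c)
  have hra : a ≤ ‖r‖ := le_norm_quad a (c + t)
  have hrn : 0 < ‖r‖ := lt_of_lt_of_le ha hra
  have hq0 : q ≠ 0 := norm_pos_iff.1 hqn
  have hr0 : r ≠ 0 := norm_pos_iff.1 hrn
  have hcq : c ^ 2 ≤ ‖q‖ := sq_le_norm_quad a c
  have e1 : kern a (c + t) - kern a c - t * (-2 * c / q ^ 2).re =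
      (1 / r - 1 / q - t * (-2 * c / q ^ 2)).re := by
    rw [kern_eq_re, kern_eq_re, sub_re, sub_re, re_ofReal_mul]
  have hrq : r = q + 2 * c * t + t ^ 2 := by rw [hr, hq]; push_cast; ring
  have e2 : (1 / r - 1 / q - t * (-2 * c / q ^ 2)) =
      ((t ^ 2 : ℝ) * (-q + ((4 * c ^ 2 + 2 * c * t : ℝ) : ℂ))) / (q ^ 2 * r) := by
    have : 1 / r - 1 / q - t * (-2 * c / q ^ 2) = (q ^ 2 - q * r + 2 * c * t * r) / (q ^ 2 * r) := by
      field_simp; ring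
    rw [this]
    congr 1
    rw [hrq]; push_cast; ring
  rw [e1, e2]
  refine (abs_re_le_norm _).trans ?_
  rw [norm_div, norm_mul, norm_mul, norm_pow]
  have h1 : ‖((t ^ 2 : ℝ) : ℂ)‖ ≤ 1 := by
    rw [norm_real, Real.norm_eq_abs, abs_of_nonneg (sq_nonneg t), ← sq_abs]
    nlinarith [abs_nonneg t]
  have h2 : ‖(-q + ((4 * c ^ 2 + 2 * c * t : ℝ) : ℂ))‖ ≤ 7 * ‖q‖ := by
    refine (norm_add_le _ _).trans ?_
    rw [norm_neg, norm_real, Real.norm_eq_abs]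
    have : |4 * c ^ 2 + 2 * c * t| ≤ 6 * c ^ 2 := by
      rw [abs_le] at ht ⊢
      constructor <;> nlinarith
    nlinarith
  rw [div_le_div_iff₀ (by positivity) (by positivity)]
  calc ‖((t ^ 2 : ℝ) : ℂ)‖ * ‖(-q + ((4 * c ^ 2 + 2 * c * t : ℝ) : ℂ))‖ * (a * ‖q‖)
      ≤ 1 * (7 * ‖q‖) * (‖r‖ * ‖q‖) := by gcongr
    _ = 7 * (‖q‖ ^ 2 * ‖r‖) := by ring

open Complex in
/-- Midpoint rule error on `[n, n + 1]`. -/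
theorem abs_kern_midpoint {a : ℝ} (ha : 0 < a) (n : ℕ) :
    |kern a (n + 1 / 2) - ∫ u in (n : ℝ)..(n + 1), kern a u| ≤
      7 / (a * ‖((((n : ℝ) + 1 / 2 : ℝ) : ℂ) ^ 2 + a * I)‖) := by
  set c : ℝ := (n : ℝ) + 1 / 2 with hc
  have hc2 : 1 / 2 ≤ c := by rw [hc]; linarith [(Nat.cast_nonneg n : (0 : ℝ) ≤ n)]
  set d : ℝ := (-2 * c / ((c : ℂ) ^ 2 + a * I) ^ 2).re
  have e1 : ∫ u in (n : ℝ)..(n + 1), kern a u = ∫ t in (-1 / 2 : ℝ)..(1 / 2), kern a (c + t) := by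
    rw [intervalIntegral.integral_comp_add_left (f := kern a)]
    congr 1 <;> rw [hc] <;> ring
  have hci : Continuous fun t : ℝ ↦ kern a (c + t) := (continuous_kern ha).comp (by fun_prop)
  have e2 : ∫ t in (-1 / 2 : ℝ)..(1 / 2), (kern a (c + t) - kern a c - t * d) =
      (∫ t in (-1 / 2 : ℝ)..(1 / 2), kern a (c + t)) - kern a c := by
    rw [intervalIntegral.integral_sub
      ((by fun_prop : Continuous fun t : ℝ ↦ kern a (c + t) - kern a c).intervalIntegrable _ _)
      ((by fun_prop : Continuous fun t : ℝ ↦ t * d).intervalIntegrable _ _),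
      intervalIntegral.integral_sub (hci.intervalIntegrable _ _)
      (continuous_const.intervalIntegrable _ _)]
    simp
    norm_num
  have e3 := intervalIntegral.norm_integral_le_of_norm_le_const (a := (-1 / 2 : ℝ)) (b := 1 / 2)
    (f := fun t ↦ kern a (c + t) - kern a c - t * d)
    (C := 7 / (a * ‖((c : ℂ) ^ 2 + a * I)‖)) (fun t ht ↦ by
      rw [Set.uIoc_of_le (by norm_num)] at ht
      exact abs_kern_taylor ha hc2 (abs_le.2 ⟨by linarith [ht.1], ht.2⟩))
  rw [e2, Real.norm_eq_abs] at e3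
  rw [e1, abs_sub_comm]
  refine e3.trans (le_of_eq ?_)
  norm_num

open Filter Topology MeasureTheory Set in
theorem integral_kern {a : ℝ} (ha : 0 < a) :
    IntegrableOn (kern a) (Ioi 0) ∧
      ∫ u in Ioi (0 : ℝ), kern a u = Real.pi / (2 * Real.sqrt (2 * a)) := by
  set c := Real.sqrt (2 * a) with hc
  have hc0 : 0 < c := by positivity
  have hc2 : c ^ 2 = 2 * a := Real.sq_sqrt (by positivity)
  have hm (u : ℝ) : 0 < u ^ 2 - c * u + a := by nlinarith [sq_nonneg (u - c / 2)]
  have hp (u : ℝ) : 0 < u ^ 2 + c * u + a := by nlinarith [sq_nonneg (u + c / 2)]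
  set F : ℝ → ℝ := fun u ↦ 1 / (4 * c) *
      (Real.log (u ^ 2 - c * u + a) - Real.log (u ^ 2 + c * u + a)) +
    1 / (2 * c) * (Real.arctan ((2 * u - c) / c) + Real.arctan ((2 * u + c) / c)) with hF
  have hder (u : ℝ) : HasDerivAt F (kern a u) u := by
    have d1 : HasDerivAt (fun u : ℝ ↦ u ^ 2 - c * u + a) (2 * u - c) u := by
      simpa using (((hasDerivAt_id u).pow 2).sub ((hasDerivAt_id u).const_mul c)).add_const a
    have d2 : HasDerivAt (fun u : ℝ ↦ u ^ 2 + c * u + a) (2 * u + c) u := by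
      simpa using (((hasDerivAt_id u).pow 2).add ((hasDerivAt_id u).const_mul c)).add_const a
    have d3 : HasDerivAt (fun u : ℝ ↦ (2 * u - c) / c) (2 / c) u := by
      simpa using (((hasDerivAt_id u).const_mul 2).sub_const c).div_const c
    have d4 : HasDerivAt (fun u : ℝ ↦ (2 * u + c) / c) (2 / c) u := by
      simpa using (((hasDerivAt_id u).const_mul 2).add_const c).div_const c
    have := (((d1.log (hm u).ne').sub (d2.log (hp u).ne')).const_mul (1 / (4 * c))).add
      ((d3.arctan.add d4.arctan).const_mul (1 / (2 * c)))
    refine this.congr_deriv ?_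
    have e1 : 1 + ((2 * u - c) / c) ^ 2 = 4 * (u ^ 2 - c * u + a) / c ^ 2 := by
      field_simp; linear_combination 2 * hc2
    have e2 : 1 + ((2 * u + c) / c) ^ 2 = 4 * (u ^ 2 + c * u + a) / c ^ 2 := by
      field_simp; linear_combination 2 * hc2
    have e3 : u ^ 4 + a ^ 2 = (u ^ 2 - c * u + a) * (u ^ 2 + c * u + a) := by
      linear_combination (u ^ 2) * hc2
    have h1 := (hm u).ne'
    have h2 := (hp u).ne'
    rw [e1, e2, kern, e3]
    generalize hA : u ^ 2 - c * u + a = A at h1 ⊢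
    generalize hB : u ^ 2 + c * u + a = B at h2 ⊢
    have hAB : B - A = 2 * c * u := by rw [← hA, ← hB]; ring
    field_simp
    linear_combination 2 * u * hAB
  have hlim : Tendsto F atTop (𝓝 (1 / (4 * c) * 0 + 1 / (2 * c) * (Real.pi / 2 + Real.pi / 2))) := by
    refine Tendsto.add (Tendsto.const_mul _ ?_) (Tendsto.const_mul _ (Tendsto.add ?_ ?_))
    · have h1 : Tendsto (fun u : ℝ ↦ 1 - 2 * c * (u / (u ^ 2 + c * u + a))) atTop (𝓝 1) := by
        have h2 : Tendsto (fun u : ℝ ↦ u / (u ^ 2 + c * u + a)) atTop (𝓝 0) := by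
          refine squeeze_zero' (g := fun u : ℝ ↦ 1 / u) ?_ ?_ ?_
          · filter_upwards [eventually_gt_atTop 0] with u hu
            exact div_nonneg hu.le (hp u).le
          · filter_upwards [eventually_gt_atTop 0] with u hu
            rw [div_le_div_iff₀ (hp u) hu]
            nlinarith
          · simpa using tendsto_inv_atTop_zero (𝕜 := ℝ)
        simpa using (h2.const_mul (2 * c)).const_sub 1
      have h3 := (Real.continuousAt_log one_ne_zero).tendsto.comp h1
      rw [Real.log_one] at h3
      refine h3.congr fun u ↦ ?_
      rw [Function.comp_apply, ← Real.log_div (hm u).ne' (hp u).ne']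
      congr 1
      have := (hp u).ne'
      rw [← mul_div_assoc, one_sub_div this]
      congr 1
      ring
    · refine (tendsto_nhds_of_tendsto_nhdsWithin Real.tendsto_arctan_atTop).comp ?_
      refine Tendsto.atTop_div_const hc0 ?_
      exact tendsto_atTop_add_const_right _ _ (tendsto_id.const_mul_atTop two_pos)
    · refine (tendsto_nhds_of_tendsto_nhdsWithin Real.tendsto_arctan_atTop).comp ?_
      refine Tendsto.atTop_div_const hc0 ?_
      exact tendsto_atTop_add_const_right _ _ (tendsto_id.const_mul_atTop two_pos)
  have hnn (u : ℝ) : 0 ≤ kern a u := by unfold kern; positivity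
  refine ⟨integrableOn_Ioi_deriv_of_nonneg' (fun u _ ↦ hder u) (fun u _ ↦ hnn u) hlim, ?_⟩
  rw [integral_Ioi_of_hasDerivAt_of_nonneg' (fun u _ ↦ hder u) (fun u _ ↦ hnn u) hlim]
  have h0 : F 0 = 0 := by
    simp only [hF]
    have e1 : (2 * 0 - c) / c = -1 := by field_simp; ring
    have e2 : (2 * 0 + c) / c = 1 := by field_simp; ring
    rw [e1, e2, Real.arctan_neg]
    simp
  rw [h0]
  field_simp
  ring

/-! ### Removing poles and a maximum principle on squares -/

open Filter Topology in
/-- Removing the simple poles of `N / D` by subtracting their principal parts. -/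
theorem exists_remove_simple_poles {N D : ℂ → ℂ} (hN : Differentiable ℂ N)
    (hD : Differentiable ℂ D) (P : Finset ℂ) {U : Set ℂ}
    (hzero : ∀ z ∈ U, D z = 0 → z ∈ P) (hP : ∀ c ∈ P, D c = 0 ∧ deriv D c ≠ 0) :
    ∃ e : ℂ → ℂ, DifferentiableOn ℂ e U ∧
      ∀ z ∈ U, z ∉ P → e z = N z / D z - ∑ c ∈ P, N c / deriv D c / (z - c) := by
  classical
  set f : ℂ → ℂ := fun z ↦ N z / D z - ∑ c ∈ P, N c / deriv D c / (z - c) with hf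
  -- near every point of `U`, `f` coincides off that point with a holomorphic function
  have hloc : ∀ z ∈ U, ∃ g : ℂ → ℂ, (∀ᶠ w in 𝓝 z, DifferentiableAt ℂ g w) ∧
      ∀ᶠ w in 𝓝 z, w ≠ z → f =ᶠ[𝓝 w] g := by
    intro z hz
    by_cases hzP : z ∈ P
    · set d : ℂ → ℂ := dslope D z with hd
      have hdd : Differentiable ℂ d := by
        have := (Complex.differentiableOn_dslope (f := D) (s := Set.univ) (c := z)
          Filter.univ_mem).2 hD.differentiableOn
        exact differentiableOn_univ.1 this
      have hdz : d z ≠ 0 := by rw [hd, dslope_same]; exact (hP z hzP).2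
      have hV : ∀ᶠ w in 𝓝 z, d w ≠ 0 := hdd.continuous.continuousAt.eventually_ne hdz
      obtain ⟨V, hVs, hVo, hzV⟩ := eventually_nhds_iff.1 hV
      set q : ℂ → ℂ := fun w ↦ N w / d w with hq
      have hqV : DifferentiableOn ℂ q V := fun w hw ↦
        ((hN w).div (hdd w) (hVs w hw)).differentiableWithinAt
      have hqs : DifferentiableOn ℂ (dslope q z) V :=
        (Complex.differentiableOn_dslope (hVo.mem_nhds hzV)).2 hqV
      set R : ℂ → ℂ := fun w ↦ ∑ c ∈ P.erase z, N c / deriv D c / (w - c) with hR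
      have hW : ∀ᶠ w in 𝓝 z, w ∉ ((P.erase z : Finset ℂ) : Set ℂ) :=
        (P.erase z).finite_toSet.isClosed.isOpen_compl.mem_nhds (by simp)
      have hVe : ∀ᶠ w in 𝓝 z, w ∈ V := hVo.mem_nhds hzV
      refine ⟨fun w ↦ dslope q z w - R w, ?_, ?_⟩
      · filter_upwards [hVe, hW] with w hw hwP
        refine (hqs.differentiableAt (hVo.mem_nhds hw)).sub ?_
        refine DifferentiableAt.fun_sum fun c hc ↦ ?_
        refine (differentiableAt_const _).div (by fun_prop) ?_
        intro h
        exact hwP (by rw [sub_eq_zero.1 h]; exact hc)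
      · filter_upwards [hVe] with w hw hwz
        have h1 : ∀ᶠ y in 𝓝 w, y ≠ z := eventually_ne_nhds hwz
        filter_upwards [h1, hVo.mem_nhds hw] with y hy hyV
        have hyz : y - z ≠ 0 := sub_ne_zero.2 hy
        have e1 : D y = (y - z) * d y := by
          have := sub_smul_dslope D z y
          rw [(hP z hzP).1, sub_zero, smul_eq_mul] at this
          exact this.symm
        have e2 : dslope q z y = (N y / d y - N z / d z) / (y - z) := by
          rw [dslope_of_ne _ hy, slope_def_field]
        have e3 : d z = deriv D z := dslope_same D z
        simp only [hf, hR]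
        rw [e2, ← Finset.add_sum_erase P _ hzP, ← e3, e1]
        have := hVs y hyV
        field_simp
        ring
    · have hDz : D z ≠ 0 := fun h ↦ hzP (hzero z hz h)
      refine ⟨f, ?_, Eventually.of_forall fun w _ ↦ EventuallyEq.rfl⟩
      have h1 : ∀ᶠ w in 𝓝 z, D w ≠ 0 := hD.continuous.continuousAt.eventually_ne hDz
      have h2 : ∀ᶠ w in 𝓝 z, w ∉ (P : Set ℂ) :=
        P.finite_toSet.isClosed.isOpen_compl.mem_nhds (by simpa using hzP)
      filter_upwards [h1, h2] with w hw hwP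
      refine ((hN w).div (hD w) hw).sub ?_
      refine DifferentiableAt.fun_sum fun c hc ↦ ?_
      refine (differentiableAt_const _).div (by fun_prop) ?_
      intro h
      exact hwP (by rw [sub_eq_zero.1 h]; exact hc)
  set e : ℂ → ℂ := fun z ↦ limUnder (𝓝[≠] z) f with he
  have hval {z : ℂ} {g : ℂ → ℂ} (hg : ContinuousAt g z) (h : f =ᶠ[𝓝[≠] z] g) : e z = g z := by
    refine Tendsto.limUnder_eq ?_
    exact (hg.tendsto.mono_left nhdsWithin_le_nhds).congr' h.symm
  refine ⟨e, ?_, ?_⟩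
  · intro z hz
    obtain ⟨g, hg, hfg⟩ := hloc z hz
    refine DifferentiableAt.differentiableWithinAt ?_
    have hzz : f =ᶠ[𝓝[≠] z] g := by
      rw [EventuallyEq, eventually_nhdsWithin_iff]
      filter_upwards [hfg] with w hw hwz using (hw hwz).self_of_nhds
    refine hg.self_of_nhds.congr_of_eventuallyEq ?_
    filter_upwards [hg, hfg] with w hw1 hw2
    by_cases h : w = z
    · subst h; exact hval hw1.continuousAt hzz
    · exact hval hw1.continuousAt ((hw2 h).filter_mono nhdsWithin_le_nhds)
  · intro z hz hzP
    have hDz : D z ≠ 0 := fun h ↦ hzP (hzero z hz h)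
    refine hval (g := f) ?_ EventuallyEq.rfl
    refine ContinuousAt.sub ((hN z).continuousAt.div (hD z).continuousAt hDz) ?_
    refine tendsto_finsetSum _ fun c hc ↦ ?_
    refine (continuousAt_const (y := N c / deriv D c)).div (by fun_prop) ?_
    intro h
    exact hzP (by rw [sub_eq_zero.1 h]; exact hc)

open Complex in
/-- A holomorphic function on a strip, bounded by `M` on the boundary of the square of half-side
`K`, has odd part `O(M ‖z‖ / K)` inside the square. -/
theorem norm_odd_part_le {e : ℂ → ℂ} {K M : ℝ} (hK : 0 < K)
    (he : DifferentiableOn ℂ e {z | |z.re| < K + 1 / 2})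
    (hM : ∀ z : ℂ, (|z.re| = K ∧ |z.im| ≤ K) ∨ (|z.im| = K ∧ |z.re| ≤ K) → ‖e z‖ ≤ M)
    {z : ℂ} (hz1 : |z.re| < K) (hz2 : |z.im| < K) :
    ‖e z - e (-z)‖ ≤ 2 * M / K * ‖z‖ := by
  set U : Set ℂ := {z | |z.re| < K + 1 / 2} with hU
  have hUo : IsOpen U := isOpen_lt (continuous_abs.comp continuous_re) continuous_const
  set o : ℂ → ℂ := fun z ↦ e z - e (-z) with ho
  have hoU : DifferentiableOn ℂ o U := by
    refine he.sub (he.comp (by fun_prop) fun w hw ↦ ?_)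
    simpa [hU] using hw
  have h0U : U ∈ nhds (0 : ℂ) := hUo.mem_nhds (by simp [hU]; linarith)
  have hG : DifferentiableOn ℂ (dslope o 0) U := (Complex.differentiableOn_dslope h0U).2 hoU
  set S : Set ℂ := Set.Ioo (-K) K ×ℂ Set.Ioo (-K) K with hS
  have hSb : Bornology.IsBounded S :=
    (Metric.isBounded_Ioo _ _).reProdIm (Metric.isBounded_Ioo _ _)
  have hcl : closure S ⊆ U := by
    rw [hS, closure_reProdIm, closure_Ioo (by linarith)]
    intro w hw
    rw [mem_reProdIm] at hw
    have : |w.re| ≤ K := abs_le.2 hw.1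
    simp only [hU, Set.mem_ofPred_eq]; linarith
  have hdc : DiffContOnCl ℂ (dslope o 0) S :=
    (hG.mono hcl).diffContOnCl
  have hbd : ∀ w ∈ frontier S, ‖dslope o 0 w‖ ≤ 2 * M / K := by
    intro w hw
    rw [hS, frontier_reProdIm, closure_Ioo (by linarith), frontier_Ioo (by linarith)] at hw
    have hw' : (|w.re| = K ∧ |w.im| ≤ K) ∨ (|w.im| = K ∧ |w.re| ≤ K) := by
      rcases hw with h | h <;> rw [mem_reProdIm] at h
      · right
        refine ⟨?_, abs_le.2 h.1⟩
        rcases h.2 with h2 | h2 <;> rw [h2]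
        · rw [abs_neg, abs_of_pos hK]
        · exact abs_of_pos hK
      · left
        refine ⟨?_, abs_le.2 h.2⟩
        rcases h.1 with h2 | h2 <;> rw [h2]
        · rw [abs_neg, abs_of_pos hK]
        · exact abs_of_pos hK
    have hwK : K ≤ ‖w‖ := by
      rcases hw' with h | h
      · rw [← h.1]; exact abs_re_le_norm w
      · rw [← h.1]; exact abs_im_le_norm w
    have hw0 : w ≠ 0 := norm_pos_iff.1 (by linarith)
    rw [dslope_of_ne _ hw0, slope_def_field]
    have ho0 : o 0 = 0 := by simp [ho]
    rw [ho0, sub_zero, sub_zero, norm_div]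
    have h1 := hM w hw'
    have h2 := hM (-w) (by simpa using hw')
    have h3 : ‖o w‖ ≤ 2 * M := (norm_sub_le _ _).trans (by linarith)
    have : 0 ≤ M := (norm_nonneg _).trans h1
    gcongr
  have hzS : z ∈ closure S := subset_closure ⟨abs_lt.1 hz1, abs_lt.1 hz2⟩
  have hmain := norm_le_of_forall_mem_frontier_norm_le hSb hdc hbd hzS
  by_cases hz0 : z = 0
  · simp [hz0]
  rw [dslope_of_ne _ hz0, slope_def_field] at hmain
  have ho0 : o 0 = 0 := by simp [ho]
  rw [ho0, sub_zero, sub_zero, norm_div, div_le_iff₀ (norm_pos_iff.2 hz0)] at hmain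
  exact hmain

/-! ### The functions `kD` and `kN` -/

open Real Complex

/-- The entire function `p sin πz + z cos πz`, whose zeros are `0` and `±λ_n`. -/
noncomputable def kD (p : ℝ) (z : ℂ) : ℂ := p * Complex.sin (π * z) + z * Complex.cos (π * z)

/-- The numerator `p cos πz - z sin πz` of the meromorphic function `kN / kD` generalising
`cot πz`. -/
noncomputable def kN (p : ℝ) (z : ℂ) : ℂ := p * Complex.cos (π * z) - z * Complex.sin (π * z)

theorem kD_neg (p : ℝ) (z : ℂ) : kD p (-z) = -kD p z := by
  simp only [kD, mul_neg, Complex.sin_neg, Complex.cos_neg]; ring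

theorem kN_neg (p : ℝ) (z : ℂ) : kN p (-z) = kN p z := by
  simp only [kN, mul_neg, Complex.sin_neg, Complex.cos_neg]; ring

theorem differentiable_kD (p : ℝ) : Differentiable ℂ (kD p) := by
  unfold kD; fun_prop

theorem differentiable_kN (p : ℝ) : Differentiable ℂ (kN p) := by
  unfold kN; fun_prop

theorem deriv_kD (p : ℝ) (z : ℂ) : deriv (kD p) z = π * kN p z + Complex.cos (π * z) := by
  have h0 : HasDerivAt (fun z : ℂ ↦ (π : ℂ) * z) π z := by
    simpa using (hasDerivAt_id z).const_mul (π : ℂ)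
  have h : HasDerivAt (kD p) (p * (Complex.cos (π * z) * π) +
      (1 * Complex.cos (π * z) + z * (-Complex.sin (π * z) * π))) z :=
    (h0.csin.const_mul (p : ℂ)).add ((hasDerivAt_id z).mul h0.ccos)
  rw [h.deriv, kN]; ring

theorem kD_exp (p : ℝ) (z : ℂ) : kD p z =
    (Complex.exp (-(π * z * I)) * (z + p * I) + Complex.exp (π * z * I) * (z - p * I)) / 2 := by
  rw [kD, Complex.sin, Complex.cos, neg_mul]
  ring

theorem kN_exp (p : ℝ) (z : ℂ) : kN p z =
    (Complex.exp (-(π * z * I)) * (z + p * I) - Complex.exp (π * z * I) * (z - p * I)) *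
      (-I) / 2 := by
  rw [kN, Complex.sin, Complex.cos, neg_mul]
  ring_nf
  simp only [I_sq]
  ring

theorem norm_exp_pi_mul_I (z : ℂ) : ‖Complex.exp (π * z * I)‖ = Real.exp (-(π * z.im)) := by
  rw [Complex.norm_exp]; simp

theorem norm_exp_neg_pi_mul_I (z : ℂ) :
    ‖Complex.exp (-(π * z * I))‖ = Real.exp (π * z.im) := by
  rw [Complex.norm_exp]; simp

theorem norm_sub_mul_I_le {p : ℝ} (hp : 0 < p) {z : ℂ} (hz : 0 ≤ z.im) :
    ‖z - p * I‖ ≤ ‖z + p * I‖ := by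
  rw [Complex.norm_def, Complex.norm_def]
  refine Real.sqrt_le_sqrt ?_
  simp only [normSq_apply, sub_re, sub_im, add_re, add_im, mul_re, mul_im, ofReal_re, ofReal_im,
    I_re, I_im]
  nlinarith [mul_nonneg hp.le hz]

theorem sinh_mul_le_norm_kD {p : ℝ} (hp : 0 < p) {z : ℂ} (hz : 0 ≤ z.im) :
    ‖z + p * I‖ * Real.sinh (π * z.im) ≤ ‖kD p z‖ := by
  rw [kD_exp, norm_div, Complex.norm_ofNat, le_div_iff₀ (by norm_num), Real.sinh_eq]
  have h1 := norm_sub_le_norm_add (Complex.exp (-(π * z * I)) * (z + p * I))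
    (Complex.exp (π * z * I) * (z - p * I))
  rw [norm_mul, norm_mul, norm_exp_pi_mul_I, norm_exp_neg_pi_mul_I] at h1
  have h2 := norm_sub_mul_I_le hp hz
  have h3 := Real.exp_pos (-(π * z.im))
  nlinarith

theorem norm_kN_le_cosh_mul {p : ℝ} (hp : 0 < p) {z : ℂ} (hz : 0 ≤ z.im) :
    ‖kN p z‖ ≤ ‖z + p * I‖ * Real.cosh (π * z.im) := by
  rw [kN_exp, norm_div, norm_mul, norm_neg, norm_I, Complex.norm_ofNat,
    div_le_iff₀ (by norm_num), Real.cosh_eq]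
  have h1 := norm_sub_le (Complex.exp (-(π * z * I)) * (z + p * I))
    (Complex.exp (π * z * I) * (z - p * I))
  rw [norm_mul, norm_mul, norm_exp_pi_mul_I, norm_exp_neg_pi_mul_I] at h1
  have h2 := norm_sub_mul_I_le hp hz
  have h3 := Real.exp_pos (-(π * z.im))
  nlinarith

theorem norm_add_mul_I_pos {p : ℝ} (hp : 0 < p) {z : ℂ} (hz : 0 ≤ z.im) : 0 < ‖z + p * I‖ := by
  have : 0 < (z + p * I).im := by simp; linarith
  exact this.trans_le ((le_abs_self _).trans (abs_im_le_norm _))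

/-- `kD` has no zeros off the real axis. -/
theorem kD_ne_zero_of_im {p : ℝ} (hp : 0 < p) {z : ℂ} (hz : z.im ≠ 0) : kD p z ≠ 0 := by
  have key : ∀ z : ℂ, 0 < z.im → kD p z ≠ 0 := fun z hz ↦ by
    rw [← norm_pos_iff]
    refine lt_of_lt_of_le ?_ (sinh_mul_le_norm_kD hp hz.le)
    exact mul_pos (norm_add_mul_I_pos hp hz.le) (Real.sinh_pos_iff.2 (by positivity))
  rcases lt_or_gt_of_ne hz with h | h
  · have := key (-z) (by simpa using h)
    rwa [kD_neg, neg_ne_zero] at this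
  · exact key z h

/-- Bound for `kN / kD` on the horizontal sides of large squares. -/
theorem norm_kN_div_kD_le_two {p : ℝ} (hp : 0 < p) {z : ℂ} (hz : 1 ≤ |z.im|) :
    ‖kN p z / kD p z‖ ≤ 2 := by
  have key : ∀ z : ℂ, 1 ≤ z.im → ‖kN p z / kD p z‖ ≤ 2 := fun z hz ↦ by
    have hz0 : 0 ≤ z.im := by linarith
    have h1 := sinh_mul_le_norm_kD hp hz0
    have h2 := norm_kN_le_cosh_mul hp hz0
    have h3 := norm_add_mul_I_pos hp hz0
    have h4 : Real.cosh (π * z.im) ≤ 2 * Real.sinh (π * z.im) := by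
      have hx : 1 ≤ π * z.im := by nlinarith [Real.pi_gt_three]
      have e1 := Real.add_one_le_exp (π * z.im)
      have e2 : Real.exp (-(π * z.im)) * Real.exp (π * z.im) = 1 := by
        rw [← Real.exp_add]; simp
      have e3 := Real.exp_pos (-(π * z.im))
      rw [Real.cosh_eq, Real.sinh_eq]
      nlinarith
    have h5 : 0 < Real.sinh (π * z.im) := Real.sinh_pos_iff.2 (by nlinarith [Real.pi_gt_three])
    rw [norm_div, div_le_iff₀ (by nlinarith [mul_pos h3 h5])]
    nlinarith
  rcases le_abs.1 hz with h | h
  · exact key z h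
  · have := key (-z) (by simpa using h)
    rwa [kD_neg, kN_neg, div_neg, norm_neg] at this

/-- Bound for `kN / kD` on the vertical lines through the integers. -/
theorem norm_kN_div_kD_le_of_re {p : ℝ} (hp : 0 < p) {z : ℂ} {K : ℕ} (hK : 1 ≤ K)
    (hz : |z.re| = K) : kD p z ≠ 0 ∧ ‖kN p z / kD p z‖ ≤ 1 + p := by
  have key : ∀ z : ℂ, z.re = K → kD p z ≠ 0 ∧ ‖kN p z / kD p z‖ ≤ 1 + p := fun z hz ↦ by
    have hK1 : (1 : ℝ) ≤ K := by exact_mod_cast hK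
    have hzK : (π * z : ℂ) = (π * z.im : ℝ) * I + K * π := by
      conv_lhs => rw [← re_add_im z, hz]
      push_cast; ring
    have hs : Complex.sin (π * z) = (-1) ^ K * (Real.sinh (π * z.im) * I) := by
      rw [hzK, Complex.sin_antiperiodic.add_nat_mul_eq, Complex.sin_mul_I]; push_cast; ring
    have hc : Complex.cos (π * z) = (-1) ^ K * Real.cosh (π * z.im) := by
      rw [hzK, Complex.cos_antiperiodic.add_nat_mul_eq, Complex.cos_mul_I]; push_cast; ring
    set y := π * z.im with hy
    have hch := Real.cosh_pos y
    have hsc : |Real.sinh y| ≤ Real.cosh y := by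
      rw [abs_le, Real.cosh_eq, Real.sinh_eq]
      constructor <;> linarith [Real.exp_pos y, Real.exp_pos (-y)]
    have hz1 : 1 ≤ ‖z‖ := by
      have := (le_abs_self _).trans (abs_re_le_norm z)
      linarith
    have hDe : ‖kD p z‖ = ‖(p * Real.sinh y * I + z * Real.cosh y : ℂ)‖ := by
      rw [kD, hs, hc]
      rw [show (p * ((-1) ^ K * (Real.sinh y * I)) + z * ((-1) ^ K * Real.cosh y) : ℂ) =
        (-1) ^ K * (p * Real.sinh y * I + z * Real.cosh y) by ring, norm_mul]
      simp
    have hNe : ‖kN p z‖ = ‖(p * Real.cosh y - z * (Real.sinh y * I) : ℂ)‖ := by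
      rw [kN, hs, hc]
      rw [show (p * ((-1) ^ K * Real.cosh y) - z * ((-1) ^ K * (Real.sinh y * I)) : ℂ) =
        (-1) ^ K * (p * Real.cosh y - z * (Real.sinh y * I)) by ring, norm_mul]
      simp
    have hys : 0 ≤ z.im * Real.sinh y := by
      rcases le_total 0 z.im with h | h
      · exact mul_nonneg h (Real.sinh_nonneg_iff.2 (by positivity))
      · exact mul_nonneg_of_nonpos_of_nonpos h
          (Real.sinh_nonpos_iff.2 (mul_nonpos_of_nonneg_of_nonpos Real.pi_pos.le h))
    have hD : ‖z‖ * Real.cosh y ≤ ‖kD p z‖ := by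
      rw [hDe]
      refine abs_le_of_sq_le_sq' ?_ (norm_nonneg _) |>.2
      rw [mul_pow, ← normSq_eq_norm_sq, ← normSq_eq_norm_sq, normSq_apply, normSq_apply]
      simp only [add_re, add_im, mul_re, mul_im, ofReal_re, ofReal_im, I_re, I_im]
      ring_nf
      nlinarith [mul_nonneg (mul_nonneg hys hch.le) hp.le, sq_nonneg (p * Real.sinh y)]
    have hN : ‖kN p z‖ ≤ (p + ‖z‖) * Real.cosh y := by
      rw [hNe]
      refine (norm_sub_le _ _).trans ?_
      rw [norm_mul, norm_mul, norm_mul, norm_I, norm_real, norm_real, norm_real,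
        Real.norm_of_nonneg hp.le, Real.norm_of_nonneg hch.le, mul_one, Real.norm_eq_abs]
      nlinarith [norm_nonneg z]
    have hDpos : 0 < ‖kD p z‖ := lt_of_lt_of_le (by positivity) hD
    refine ⟨norm_pos_iff.1 hDpos, ?_⟩
    rw [norm_div, div_le_iff₀ hDpos]
    have : (p + ‖z‖) * Real.cosh y ≤ (1 + p) * (‖z‖ * Real.cosh y) := by
      rw [← mul_assoc]; gcongr; nlinarith
    nlinarith
  rcases abs_eq (by positivity : (0 : ℝ) ≤ K) |>.1 hz with h | h
  · exact key z h
  · have := key (-z) (by simp [h])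
    rwa [kD_neg, kN_neg, div_neg, norm_neg, neg_ne_zero] at this

/-! ### Zeros of `kD` and Koshliakov sequences -/

/-- A Koshliakov sequence, indexed from `0`: `l n` is the root `λ_{n+1}` of
`tan πλ = -λ / p` in `(n + 1/2, n + 1)`. -/
def KoshSeq (p : ℝ) (l : ℕ → ℝ) : Prop :=
  ∀ n : ℕ, (n : ℝ) + 1 / 2 < l n ∧ l n < n + 1 ∧ Real.tan (π * l n) = -l n / p

/-- Koshliakov's weight, the residue of `π kN / kD` at a nonzero zero `t` of `kD`. -/
noncomputable def kW (p t : ℝ) : ℝ := (p ^ 2 + t ^ 2) / (p * (p + 1 / π) + t ^ 2)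

theorem kW_pos {p : ℝ} (hp : 0 < p) (t : ℝ) : 0 < kW p t := by
  have := Real.pi_pos
  unfold kW; positivity

theorem kW_le_one {p : ℝ} (hp : 0 < p) (t : ℝ) : kW p t ≤ 1 := by
  have := Real.pi_pos
  unfold kW
  rw [div_le_one (by positivity)]
  have : 0 ≤ p * (1 / π) := by positivity
  nlinarith

namespace KoshSeq

variable {p : ℝ} {l : ℕ → ℝ}

theorem pos (h : KoshSeq p l) (n : ℕ) : 0 < l n := by
  have := (h n).1
  have : (0 : ℝ) ≤ n := n.cast_nonneg
  linarith

theorem cos_ne_zero (h : KoshSeq p l) (hp : 0 < p) (n : ℕ) : Real.cos (π * l n) ≠ 0 := by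
  intro hc
  have h1 := (h n).2.2
  rw [Real.tan_eq_sin_div_cos, hc, div_zero, eq_comm, div_eq_zero_iff, neg_eq_zero] at h1
  exact h1.elim (h.pos n).ne' hp.ne'

theorem sin_eq (h : KoshSeq p l) (hp : 0 < p) (n : ℕ) :
    Real.sin (π * l n) = -l n / p * Real.cos (π * l n) := by
  rw [← (h n).2.2, Real.tan_mul_cos (h.cos_ne_zero hp n)]

theorem csin_eq (h : KoshSeq p l) (hp : 0 < p) (n : ℕ) :
    Complex.sin (π * l n) = -l n / p * Complex.cos (π * l n) := by
  have := congrArg (fun r : ℝ ↦ (r : ℂ)) (h.sin_eq hp n)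
  push_cast at this
  exact this

theorem kD_eq_zero (h : KoshSeq p l) (hp : 0 < p) (n : ℕ) : kD p (l n) = 0 := by
  have hpC : (p : ℂ) ≠ 0 := by exact_mod_cast hp.ne'
  rw [kD, h.csin_eq hp]
  field_simp
  ring

theorem kN_eq (h : KoshSeq p l) (hp : 0 < p) (n : ℕ) :
    kN p (l n) = ((p + l n ^ 2 / p) * Real.cos (π * l n) : ℝ) := by
  have hpC : (p : ℂ) ≠ 0 := by exact_mod_cast hp.ne'
  rw [kN, h.csin_eq hp]
  push_cast
  field_simp
  ring

theorem deriv_kD_eq (h : KoshSeq p l) (hp : 0 < p) (n : ℕ) :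
    deriv (kD p) (l n) = ((π * (p + l n ^ 2 / p) + 1) * Real.cos (π * l n) : ℝ) := by
  rw [deriv_kD, h.kN_eq hp]
  push_cast
  ring

theorem deriv_kD_ne_zero (h : KoshSeq p l) (hp : 0 < p) (n : ℕ) : deriv (kD p) (l n) ≠ 0 := by
  rw [h.deriv_kD_eq hp, Ne, ofReal_eq_zero]
  have := Real.pi_pos
  exact mul_ne_zero (by positivity) (h.cos_ne_zero hp n)

theorem residue_eq (h : KoshSeq p l) (hp : 0 < p) (n : ℕ) :
    π * kN p (l n) / deriv (kD p) (l n) = kW p (l n) := by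
  rw [h.deriv_kD_eq hp, h.kN_eq hp, ← ofReal_mul, ← ofReal_div]
  congr 1
  have := h.cos_ne_zero hp n
  have hpi := Real.pi_pos
  have : 0 < l n := h.pos n
  rw [kW]
  field_simp
  ring

theorem _root_.deriv_kD_neg (p : ℝ) (z : ℂ) : deriv (kD p) (-z) = deriv (kD p) z := by
  rw [deriv_kD, deriv_kD, kN_neg, mul_neg, Complex.cos_neg]

theorem eq_of_real_zero (h : KoshSeq p l) (hp : 0 < p) {t : ℝ} (ht : 0 < t)
    (h0 : p * Real.sin (π * t) + t * Real.cos (π * t) = 0) : ∃ n, t = l n := by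
  have hpi := Real.pi_pos
  have hc : Real.cos (π * t) ≠ 0 := by
    intro hc
    rw [hc, mul_zero, add_zero, mul_eq_zero] at h0
    have := Real.sin_sq_add_cos_sq (π * t)
    rw [hc, h0.resolve_left hp.ne'] at this
    norm_num at this
  have htan : Real.tan (π * t) = -t / p := by
    rw [Real.tan_eq_sin_div_cos, div_eq_div_iff hc hp.ne']; linarith
  obtain ⟨n, hn⟩ : ∃ n : ℕ, ⌈t⌉₊ = n + 1 :=
    Nat.exists_eq_succ_of_ne_zero (Nat.ceil_pos.2 ht).ne'
  have hn1 : t ≤ n + 1 := by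
    have := Nat.le_ceil t
    rw [hn] at this; exact_mod_cast this
  have hn2 : (n : ℝ) < t := Nat.lt_ceil.1 (by omega)
  have hshift (s : ℝ) : Real.tan (π * s) = Real.tan (π * (s - (n + 1))) := by
    rw [← Real.tan_sub_nat_mul_pi (π * s) (n + 1)]
    push_cast; congr 1; ring
  have hlow : -(1 / 2) < t - (n + 1) := by
    by_contra hcon
    have h1 : Real.tan (π * (t - n)) = Real.tan (π * t) := by
      rw [← Real.tan_sub_nat_mul_pi (π * t) n]; congr 1; ring
    have h2 : 0 ≤ Real.tan (π * (t - n)) :=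
      Real.tan_nonneg_of_nonneg_of_le_pi_div_two (by nlinarith) (by nlinarith)
    have h3 : 0 < t / p := by positivity
    rw [h1, htan, neg_div] at h2
    linarith
  refine ⟨n, ?_⟩
  obtain ⟨hl1, hl2, hl3⟩ := h n
  rcases lt_trichotomy t (l n) with hlt | heq | hgt
  · exfalso
    have := Real.tan_lt_tan_of_lt_of_lt_pi_div_two (x := π * (t - (n + 1)))
      (y := π * (l n - (n + 1))) (by nlinarith) (by nlinarith) (by nlinarith)
    rw [← hshift, ← hshift, hl3, htan, div_lt_div_iff_of_pos_right hp] at this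
    linarith
  · exact heq
  · exfalso
    have := Real.tan_lt_tan_of_lt_of_lt_pi_div_two (y := π * (t - (n + 1)))
      (x := π * (l n - (n + 1))) (by nlinarith) (by nlinarith) (by nlinarith)
    rw [← hshift, ← hshift, hl3, htan, div_lt_div_iff_of_pos_right hp] at this
    linarith

theorem zeros (h : KoshSeq p l) (hp : 0 < p) {z : ℂ} (hz : kD p z = 0) :
    z = 0 ∨ ∃ n, z = l n ∨ z = -(l n : ℂ) := by
  have him : z.im = 0 := by
    by_contra him
    exact kD_ne_zero_of_im hp him hz
  have key : ∀ t : ℝ, kD p t = 0 → p * Real.sin (π * t) + t * Real.cos (π * t) = 0 := by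
    intro t ht
    rw [kD] at ht
    exact_mod_cast ht
  have hzr : z = (z.re : ℂ) := Complex.ext rfl (by simpa using him)
  rcases lt_trichotomy z.re 0 with hlt | heq | hgt
  · right
    obtain ⟨n, hn⟩ := h.eq_of_real_zero hp (t := -z.re) (by linarith) (key _ (by
      push_cast; rw [← hzr, kD_neg, hz, neg_zero]))
    refine ⟨n, Or.inr ?_⟩
    rw [hzr, ← hn]; push_cast; ring
  · left; rw [hzr, heq]; rfl
  · right
    obtain ⟨n, hn⟩ := h.eq_of_real_zero hp hgt (key _ (by rw [← hzr, hz]))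
    exact ⟨n, Or.inl (by rw [hzr, hn])⟩

theorem injective (h : KoshSeq p l) : Function.Injective l := by
  refine StrictMono.injective (strictMono_nat_of_lt_succ fun n ↦ ?_)
  have h1 := (h n).2.1
  have h2 := (h (n + 1)).1
  push_cast at h2
  linarith

/-- The gap between `K` and `λ_n`; for `n = K - 1` the hypothesis on `K` keeps `λ_K` away from
`K`. -/
theorem one_div_sub_le (h : KoshSeq p l) (hp : 0 < p) {K n : ℕ} (hK : p + 1 ≤ K) (hn : n < K) :
    l n < K ∧ 1 / (K - l n) ≤ 4 * (1 / ((K : ℝ) - n)) := by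
  have hpi := Real.pi_pos
  obtain ⟨hl1, hl2, hl3⟩ := h n
  have hnK : (n : ℝ) + 1 ≤ K := by exact_mod_cast hn
  have hgap : ((K : ℝ) - n) / 4 ≤ K - l n := by
    rcases Nat.lt_or_ge (n + 1) K with h1 | h1
    · have : (n : ℝ) + 1 + 1 ≤ K := by exact_mod_cast h1
      linarith
    · have hKn : (K : ℝ) = n + 1 := by exact_mod_cast (show K = n + 1 by omega)
      by_contra hcon
      have h2 : Real.tan (π * (K - l n)) < Real.tan (π / 4) :=
        Real.tan_lt_tan_of_lt_of_lt_pi_div_two (by nlinarith) (by nlinarith) (by nlinarith)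
      have h3 : Real.tan (π * (K - l n)) = l n / p := by
        rw [show π * (K - l n) = K * π - π * l n by ring, Real.tan_nat_mul_pi_sub, hl3]
        ring
      rw [h3, Real.tan_pi_div_four, div_lt_one hp] at h2
      linarith
  refine ⟨by linarith, ?_⟩
  rw [mul_one_div, div_le_div_iff₀ (by linarith) (by linarith)]
  linarith

end KoshSeq

/-! ### The partial fraction expansion of `kN / kD` -/

namespace KoshSeq

variable {p : ℝ} {l : ℕ → ℝ}

/-- `π kN / kD` minus its principal parts at `0` and at the first `K` pairs `±λ_n`. -/
noncomputable def remainder (p : ℝ) (l : ℕ → ℝ) (K : ℕ) (z : ℂ) : ℂ :=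
  π * kN p z / kD p z -
    (kW p 0 / z + ∑ n ∈ Finset.range K, kW p (l n) * (1 / (z - l n) + 1 / (z + l n)))

theorem remainder_neg (p : ℝ) (l : ℕ → ℝ) (K : ℕ) (z : ℂ) :
    remainder p l K (-z) = -remainder p l K z := by
  have hs : ∑ n ∈ Finset.range K, (kW p (l n) : ℂ) * (1 / (-z - l n) + 1 / (-z + l n)) =
      -∑ n ∈ Finset.range K, (kW p (l n) : ℂ) * (1 / (z - l n) + 1 / (z + l n)) := by
    rw [← Finset.sum_neg_distrib]
    refine Finset.sum_congr rfl fun n _ ↦ ?_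
    rw [show -z - (l n : ℂ) = -(z + l n) by ring, show -z + (l n : ℂ) = -(z - l n) by ring,
      one_div_neg_eq_neg_one_div, one_div_neg_eq_neg_one_div]
    ring
  rw [remainder, remainder, hs, kN_neg, kD_neg, div_neg, div_neg]
  ring

/-- The zeros of `kD` in the strip `|Re z| < K + 1/2`. -/
noncomputable def poles (l : ℕ → ℝ) (K : ℕ) : Finset ℂ :=
  insert 0 ((Finset.range K).image (fun n ↦ (l n : ℂ)) ∪
    (Finset.range K).image (fun n ↦ -(l n : ℂ)))

theorem sum_poles (h : KoshSeq p l) (K : ℕ) (f : ℂ → ℂ) :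
    ∑ c ∈ poles l K, f c = f 0 + ∑ n ∈ Finset.range K, (f (l n) + f (-l n)) := by
  have hinj : Function.Injective (fun n ↦ (l n : ℂ)) := ofReal_injective.comp h.injective
  rw [poles, Finset.sum_insert, Finset.sum_union, Finset.sum_image, Finset.sum_image,
    Finset.sum_add_distrib]
  · intro a _ b _ hab
    exact hinj (neg_injective hab)
  · exact hinj.injOn
  · rw [Finset.disjoint_left]
    intro a ha hb
    simp only [Finset.mem_image] at ha hb
    obtain ⟨n, _, rfl⟩ := ha
    obtain ⟨m, _, hm⟩ := hb
    have h1 : -l m = l n := by exact_mod_cast hm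
    have := h.pos n
    have := h.pos m
    linarith
  · simp only [Finset.mem_union, Finset.mem_image, not_or, not_exists, not_and]
    refine ⟨fun n _ h0 ↦ (h.pos n).ne' (by exact_mod_cast h0), fun n _ h0 ↦ ?_⟩
    exact (h.pos n).ne' (by exact_mod_cast neg_eq_zero.1 h0)

theorem kD_poles (h : KoshSeq p l) (hp : 0 < p) {K : ℕ} {c : ℂ} (hc : c ∈ poles l K) :
    kD p c = 0 ∧ deriv (kD p) c ≠ 0 := by
  simp only [poles, Finset.mem_insert, Finset.mem_union, Finset.mem_image] at hc
  rcases hc with rfl | ⟨n, _, rfl⟩ | ⟨n, _, rfl⟩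
  · refine ⟨by simp [kD], ?_⟩
    rw [deriv_kD]
    have : 0 < π * p + 1 := by have := Real.pi_pos; positivity
    simp only [kN, mul_zero, Complex.cos_zero, zero_mul, sub_zero, mul_one]
    exact_mod_cast this.ne'
  · exact ⟨h.kD_eq_zero hp n, h.deriv_kD_ne_zero hp n⟩
  · rw [kD_neg, deriv_kD_neg, h.kD_eq_zero hp]
    exact ⟨neg_zero, h.deriv_kD_ne_zero hp n⟩

theorem mem_poles (h : KoshSeq p l) (hp : 0 < p) {K : ℕ} {z : ℂ} (hz : |z.re| < K + 1 / 2)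
    (h0 : kD p z = 0) : z ∈ poles l K := by
  have aux : ∀ n : ℕ, l n < K + 1 / 2 → n < K := fun n hn ↦ by
    have := (h n).1
    have : (n : ℝ) < K := by linarith
    exact_mod_cast this
  simp only [poles, Finset.mem_insert, Finset.mem_union, Finset.mem_image, Finset.mem_range]
  rcases h.zeros hp h0 with rfl | ⟨n, rfl | rfl⟩
  · exact Or.inl rfl
  · exact Or.inr (Or.inl ⟨n, aux n (by simpa [abs_of_pos (h.pos n)] using hz), rfl⟩)
  · exact Or.inr (Or.inr ⟨n, aux n (by simpa [abs_of_pos (h.pos n)] using hz), rfl⟩)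

theorem residue_zero (hp : 0 < p) : π * kN p 0 / deriv (kD p) 0 = kW p 0 := by
  have hpi := Real.pi_pos
  rw [deriv_kD, kW]
  simp only [kN, mul_zero, Complex.cos_zero, zero_mul, sub_zero, mul_one]
  have h1 : (π * p / (π * p + 1) : ℝ) = (p ^ 2 + 0 ^ 2) / (p * (p + 1 / π) + 0 ^ 2) := by
    field_simp
    ring
  rw [← h1]
  push_cast
  rfl

theorem exists_remainder (h : KoshSeq p l) (hp : 0 < p) (K : ℕ) :
    ∃ e : ℂ → ℂ, DifferentiableOn ℂ e {z | |z.re| < (K : ℝ) + 1 / 2} ∧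
      ∀ z : ℂ, |z.re| < (K : ℝ) + 1 / 2 → kD p z ≠ 0 → e z = remainder p l K z := by
  obtain ⟨e, he, hez⟩ := exists_remove_simple_poles
    (N := fun z ↦ π * kN p z) ((differentiable_kN p).const_mul _) (differentiable_kD p)
    (poles l K) (U := {z | |z.re| < (K : ℝ) + 1 / 2})
    (fun z hz h0 ↦ h.mem_poles hp hz h0) (fun c hc ↦ h.kD_poles hp hc)
  refine ⟨e, he, fun z hz hD ↦ ?_⟩
  rw [hez z hz fun hzP ↦ hD (h.kD_poles hp hzP).1, h.sum_poles, remainder, residue_zero hp,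
    sub_zero]
  congr 2
  refine Finset.sum_congr rfl fun n _ ↦ ?_
  rw [deriv_kD_neg, kN_neg, h.residue_eq hp, sub_neg_eq_add]
  ring

/-- The remainder on the boundary of the square of half-side `K`. -/
theorem norm_remainder_le (h : KoshSeq p l) (hp : 0 < p) {K : ℕ} (hK : p + 1 ≤ K) {z : ℂ}
    (hz : (|z.re| = K ∧ |z.im| ≤ K) ∨ (|z.im| = K ∧ |z.re| ≤ K)) :
    kD p z ≠ 0 ∧ ‖remainder p l K z‖ ≤
      π * (2 + p) + 1 + 8 * ∑ j ∈ Finset.range K, 1 / ((j : ℝ) + 1) := by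
  have hpi := Real.pi_pos
  have hK1 : (1 : ℝ) ≤ K := by linarith
  have hquot : kD p z ≠ 0 ∧ ‖kN p z / kD p z‖ ≤ 2 + p := by
    rcases hz with hz | hz
    · have := norm_kN_div_kD_le_of_re hp (by exact_mod_cast hK1) hz.1
      exact ⟨this.1, by linarith⟩
    · have h1 : 1 ≤ |z.im| := by rw [hz.1]; exact hK1
      exact ⟨kD_ne_zero_of_im hp fun h0 ↦ by rw [h0] at h1; norm_num at h1,
        by linarith [norm_kN_div_kD_le_two hp h1]⟩
  refine ⟨hquot.1, ?_⟩
  have hzK : (K : ℝ) ≤ ‖z‖ := by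
    rcases hz with hz | hz
    · rw [← hz.1]; exact abs_re_le_norm z
    · rw [← hz.1]; exact abs_im_le_norm z
  have hdist : ∀ c : ℝ, ∀ r : ℝ, |c| = r → r < K → K - r ≤ ‖z - c‖ := by
    intro c r hc hr
    rcases hz with hz | hz
    · refine le_trans ?_ (abs_re_le_norm _)
      rw [sub_re, ofReal_re, ← hz.1, ← hc]
      exact abs_sub_abs_le_abs_sub _ _
    · refine le_trans ?_ (abs_im_le_norm _)
      rw [sub_im, ofReal_im, sub_zero, hz.1]
      linarith [abs_nonneg c]
  have hterm : ∀ n ∈ Finset.range K, ‖(kW p (l n) : ℂ) * (1 / (z - l n) + 1 / (z + l n))‖ ≤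
      8 * (1 / ((K : ℝ) - n)) := by
    intro n hn
    obtain ⟨hlt, hle⟩ := h.one_div_sub_le hp hK (Finset.mem_range.1 hn)
    have hd1 := hdist (l n) (l n) (abs_of_pos (h.pos n)) hlt
    have hd2 := hdist (-l n) (l n) (by rw [abs_neg]; exact abs_of_pos (h.pos n)) hlt
    rw [ofReal_neg, sub_neg_eq_add] at hd2
    have hpos : 0 < K - l n := by linarith
    rw [norm_mul, norm_real, Real.norm_of_nonneg (kW_pos hp _).le]
    have h1 : ‖1 / (z - l n) + 1 / (z + l n)‖ ≤ 1 / (K - l n) + 1 / (K - l n) := by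
      refine (norm_add_le _ _).trans ?_
      rw [norm_div, norm_div, norm_one]
      gcongr
    have h2 := kW_le_one hp (l n)
    have h3 := kW_pos hp (l n)
    nlinarith [norm_nonneg (1 / (z - l n) + 1 / (z + l n))]
  have hsum : ‖∑ n ∈ Finset.range K, (kW p (l n) : ℂ) * (1 / (z - l n) + 1 / (z + l n))‖ ≤
      8 * ∑ j ∈ Finset.range K, 1 / ((j : ℝ) + 1) := by
    refine (norm_sum_le_of_le _ hterm).trans (le_of_eq ?_)
    rw [← Finset.mul_sum, ← Finset.sum_range_reflect]
    congr 1
    refine Finset.sum_congr rfl fun n hn ↦ ?_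
    have hn' := Finset.mem_range.1 hn
    rw [Nat.sub_sub, Nat.cast_sub (by omega)]
    push_cast
    congr 1; ring
  have h0 : ‖(kW p 0 : ℂ) / z‖ ≤ 1 := by
    rw [norm_div, norm_real, Real.norm_of_nonneg (kW_pos hp _).le, div_le_one (by linarith)]
    linarith [kW_le_one hp 0]
  have hq : ‖π * kN p z / kD p z‖ ≤ π * (2 + p) := by
    rw [mul_div_assoc, norm_mul, norm_real, Real.norm_of_nonneg hpi.le]
    gcongr
    exact hquot.2
  rw [remainder]
  refine (norm_sub_le _ _).trans ?_
  have := norm_add_le ((kW p 0 : ℂ) / z)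
    (∑ n ∈ Finset.range K, (kW p (l n) : ℂ) * (1 / (z - l n) + 1 / (z + l n)))
  linarith

open Filter Topology in
/-- The remainders tend to `0` off the real axis: the function `π kN / kD` is the sum of its
principal parts, taken symmetrically. -/
theorem tendsto_remainder (h : KoshSeq p l) (hp : 0 < p) {z : ℂ} (hz : z.im ≠ 0) :
    Tendsto (fun K ↦ remainder p l K z) atTop (𝓝 0) := by
  set M : ℕ → ℝ := fun K ↦ π * (2 + p) + 1 + 8 * ∑ j ∈ Finset.range K, 1 / ((j : ℝ) + 1) with hM
  have hMK : Tendsto (fun K : ℕ ↦ M K / K * ‖z‖) atTop (𝓝 0) := by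
    have h1 : Tendsto (fun K : ℕ ↦ (π * (2 + p) + 1) / (K : ℝ)) atTop (𝓝 0) :=
      tendsto_const_div_atTop_nhds_zero_nat _
    have h2 := (tendsto_one_div_add_atTop_nhds_zero_nat (𝕜 := ℝ)).cesaro
    have h3 := ((h1.add (h2.const_mul 8)).mul_const ‖z‖)
    simp only [mul_zero, add_zero, zero_mul] at h3
    refine h3.congr fun K ↦ ?_
    simp only [hM]
    ring
  refine squeeze_zero_norm' ?_ hMK
  have hl1 : ∀ᶠ K : ℕ in atTop, p + 1 ≤ (K : ℝ) := tendsto_natCast_atTop_atTop.eventually_ge_atTop _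
  have hl2 : ∀ᶠ K : ℕ in atTop, ‖z‖ < (K : ℝ) := tendsto_natCast_atTop_atTop.eventually_gt_atTop _
  filter_upwards [hl1, hl2] with K hK1 hK2
  have hK0 : (0 : ℝ) < K := by linarith
  obtain ⟨e, he, hez⟩ := h.exists_remainder hp K
  have hre := (abs_re_le_norm z).trans_lt hK2
  have him := (abs_im_le_norm z).trans_lt hK2
  have key := norm_odd_part_le (M := M K) hK0 he (fun w hw ↦ by
    obtain ⟨h1, h2⟩ := h.norm_remainder_le hp hK1 hw
    rw [hez w (by rcases hw with hw | hw <;> linarith [hw.1, hw.2]) h1]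
    exact h2) hre him
  rw [hez z (by linarith) (kD_ne_zero_of_im hp hz),
    hez (-z) (by rw [neg_re, abs_neg]; linarith) (kD_ne_zero_of_im hp (by simpa using hz)),
    remainder_neg, sub_neg_eq_add, ← two_mul, norm_mul, Complex.norm_ofNat] at key
  rw [mul_div_assoc, mul_assoc] at key
  linarith

end KoshSeq

/-! ### Special values of the expansion -/

namespace KoshSeq

variable {p : ℝ} {l : ℕ → ℝ}

theorem half_le (h : KoshSeq p l) (n : ℕ) : ((n : ℝ) + 1) / 2 ≤ l n := by
  have := (h n).1
  have : (0 : ℝ) ≤ n := n.cast_nonneg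
  linarith

theorem one_div_sq_le (h : KoshSeq p l) (n : ℕ) : 1 / l n ^ 2 ≤ 4 * (1 / ((n : ℝ) + 1) ^ 2) := by
  have h1 := h.half_le n
  have h2 : (0 : ℝ) < (n : ℝ) + 1 := by positivity
  have h3 : (((n : ℝ) + 1) / 2) ^ 2 ≤ l n ^ 2 := by gcongr
  rw [mul_one_div, div_le_div_iff₀ (pow_pos (h.pos n) 2) (by positivity)]
  nlinarith

theorem _root_.summable_four_mul_one_div_sq :
    Summable fun n : ℕ ↦ 4 * (1 / ((n : ℝ) + 1) ^ 2) := by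
  have := (summable_nat_add_iff 1).2 (Real.summable_one_div_nat_pow.2 one_lt_two)
  refine Summable.mul_left 4 ?_
  simpa using this

open Filter Topology in
/-- The partial fraction expansion of `π kN / kD` at `z = i s`. -/
theorem hasSum_resolvent (h : KoshSeq p l) (hp : 0 < p) {s : ℂ} (hs : 0 < s.re)
    (hs2 : 0 ≤ (s ^ 2).re) :
    HasSum (fun n ↦ (kW p (l n) : ℂ) / ((l n : ℂ) ^ 2 + s ^ 2))
      ((π * ((p * Complex.cosh (π * s) + s * Complex.sinh (π * s)) /
        (p * Complex.sinh (π * s) + s * Complex.cosh (π * s))) - kW p 0 / s) / (2 * s)) := by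
  have hs0 : s ≠ 0 := fun h0 ↦ by simp [h0] at hs
  have hnorm : ∀ n, l n ^ 2 ≤ ‖(l n : ℂ) ^ 2 + s ^ 2‖ := fun n ↦ by
    refine le_trans ?_ ((le_abs_self _).trans (abs_re_le_norm _))
    rw [add_re, ← ofReal_pow, ofReal_re]
    linarith
  have hsum : Summable fun n ↦ (kW p (l n) : ℂ) / ((l n : ℂ) ^ 2 + s ^ 2) := by
    refine Summable.of_norm_bounded summable_four_mul_one_div_sq fun n ↦ ?_
    refine le_trans ?_ (h.one_div_sq_le n)
    rw [norm_div, norm_real, Real.norm_of_nonneg (kW_pos hp _).le]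
    have := h.pos n
    exact div_le_div₀ zero_le_one (kW_le_one hp _) (by positivity) (hnorm n)
  rw [hsum.hasSum_iff_tendsto_nat]
  have hrem := h.tendsto_remainder hp (z := s * I) (by simpa using hs.ne')
  have hsin : Complex.sin (π * (s * I)) = Complex.sinh (π * s) * I := by
    rw [← mul_assoc, Complex.sin_mul_I]
  have hcos : Complex.cos (π * (s * I)) = Complex.cosh (π * s) := by
    rw [← mul_assoc, Complex.cos_mul_I]
  set Q := (p * Complex.cosh (π * s) + s * Complex.sinh (π * s)) /
        (p * Complex.sinh (π * s) + s * Complex.cosh (π * s)) with hQ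
  have hND : π * kN p (s * I) / kD p (s * I) = -I * (π * Q) := by
    rw [kN, kD, hsin, hcos, hQ]
    rw [show (p * Complex.cosh (π * s) - s * I * (Complex.sinh (π * s) * I) : ℂ) =
      p * Complex.cosh (π * s) + s * Complex.sinh (π * s) by ring_nf; rw [I_sq]; ring,
      show (p * (Complex.sinh (π * s) * I) + s * I * Complex.cosh (π * s) : ℂ) =
      I * (p * Complex.sinh (π * s) + s * Complex.cosh (π * s)) by ring,
      div_mul_eq_div_div_swap, mul_div_assoc, Complex.div_I]
    ring
  have hpart : ∀ K, ∑ n ∈ Finset.range K, (kW p (l n) : ℂ) / ((l n : ℂ) ^ 2 + s ^ 2) =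
      (π * Q - kW p 0 / s - I * remainder p l K (s * I)) / (2 * s) := by
    intro K
    have h1 : ∑ n ∈ Finset.range K, (kW p (l n) : ℂ) * (1 / (s * I - l n) + 1 / (s * I + l n)) =
        -I * (2 * s * ∑ n ∈ Finset.range K, (kW p (l n) : ℂ) / ((l n : ℂ) ^ 2 + s ^ 2)) := by
      rw [Finset.mul_sum, Finset.mul_sum]
      refine Finset.sum_congr rfl fun n _ ↦ ?_
      have hne : (l n : ℂ) ^ 2 + s ^ 2 ≠ 0 := by
        rw [← norm_pos_iff]
        exact lt_of_lt_of_le (pow_pos (h.pos n) 2) (hnorm n)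
      have hfac : (s * I - l n) * (s * I + l n) = -((l n : ℂ) ^ 2 + s ^ 2) := by
        ring_nf; rw [I_sq]; ring
      have hm : (s * I - l n) * (s * I + l n) ≠ 0 := by rw [hfac]; exact neg_ne_zero.2 hne
      have ha := left_ne_zero_of_mul hm
      have hb := right_ne_zero_of_mul hm
      rw [div_add_div _ _ ha hb, hfac]
      field_simp
      ring
    rw [remainder, hND, h1, eq_div_iff (by simpa using hs0), div_mul_eq_div_div_swap (kW p 0 : ℂ),
      Complex.div_I]
    ring_nf
    simp only [I_sq]
    ring_nf
  simp_rw [hpart]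
  have := ((tendsto_const_nhds (x := π * Q - kW p 0 / s)).sub (hrem.const_mul I)).div_const (2 * s)
  simpa using this

theorem hasSum_resolvent_real (h : KoshSeq p l) (hp : 0 < p) {s : ℝ} (hs : 0 < s) :
    HasSum (fun n ↦ kW p (l n) / (l n ^ 2 + s ^ 2))
      ((π * ((p * Real.cosh (π * s) + s * Real.sinh (π * s)) /
        (p * Real.sinh (π * s) + s * Real.cosh (π * s))) - kW p 0 / s) / (2 * s)) := by
  have := h.hasSum_resolvent hp (s := s) (by simpa using hs) (by
    rw [← ofReal_pow, ofReal_re]; positivity)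
  rw [← Complex.hasSum_ofReal]
  push_cast
  exact this

theorem kW_zero (hp : 0 < p) : kW p 0 = π * p / (π * p + 1) := by
  have := Real.pi_pos
  rw [kW]
  field_simp
  ring

/-- The case `s = p`, where the quotient of hyperbolic functions is `1`. -/
theorem hasSum_one_sub_kW (h : KoshSeq p l) (hp : 0 < p) :
    HasSum (fun n ↦ 1 - kW p (l n)) (kW p 0 / 2) := by
  have hpi := Real.pi_pos
  have h1 := (h.hasSum_resolvent_real hp hp).mul_left (p / π)
  have hQ : (p * Real.cosh (π * p) + p * Real.sinh (π * p)) /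
        (p * Real.sinh (π * p) + p * Real.cosh (π * p)) = 1 := by
    rw [add_comm, div_self]
    have := Real.cosh_pos (π * p)
    have := Real.sinh_pos_iff.2 (mul_pos hpi hp)
    positivity
  rw [hQ] at h1
  convert! h1 using 1
  · funext n
    have := h.pos n
    rw [kW]
    field_simp
    ring
  · rw [kW_zero hp]
    field_simp
    ring

end KoshSeq

open Filter Topology

theorem abs_sinh_cosh_taylor {y : ℝ} (hy : |y| ≤ 1) :
    |Real.sinh y - y - y ^ 3 / 6| ≤ |y| ^ 4 ∧ |Real.cosh y - 1 - y ^ 2 / 2| ≤ |y| ^ 4 := by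
  have h1 := Real.exp_bound hy (n := 4) (by norm_num)
  have h2 := Real.exp_bound (x := -y) (by rwa [abs_neg]) (n := 4) (by norm_num)
  simp only [Finset.sum_range_succ, Finset.sum_range_zero, abs_neg, Nat.factorial] at h1 h2
  norm_num at h1 h2
  have h0 : 0 ≤ |y| ^ 4 := by positivity
  rw [abs_le] at h1 h2
  rw [Real.sinh_eq, Real.cosh_eq]
  constructor <;> rw [abs_le] <;> constructor <;> nlinarith

theorem tendsto_sinh_sub_div : Tendsto (fun y : ℝ ↦ (Real.sinh y - y) / y ^ 3) (𝓝[>] 0)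
    (𝓝 (1 / 6)) := by
  rw [tendsto_iff_norm_sub_tendsto_zero]
  have hid : Tendsto (fun y : ℝ ↦ y) (𝓝[>] 0) (𝓝 0) := tendsto_id.mono_left nhdsWithin_le_nhds
  refine squeeze_zero' (Eventually.of_forall fun _ ↦ norm_nonneg _) ?_ hid
  filter_upwards [self_mem_nhdsWithin, nhdsWithin_le_nhds (Iio_mem_nhds one_pos)] with y hy0 hy1
  have hy0 : 0 < y := hy0
  have := (abs_sinh_cosh_taylor (by rw [abs_of_pos hy0]; exact hy1.le)).1
  rw [show (Real.sinh y - y) / y ^ 3 - 1 / 6 = (Real.sinh y - y - y ^ 3 / 6) / y ^ 3 by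
    field_simp, Real.norm_eq_abs, abs_div, abs_of_pos (pow_pos hy0 3), div_le_iff₀ (by positivity)]
  rw [abs_of_pos hy0] at this
  calc _ ≤ _ := this
    _ = y * y ^ 3 := by ring

theorem tendsto_cosh_sub_div : Tendsto (fun y : ℝ ↦ (Real.cosh y - 1) / y ^ 2) (𝓝[>] 0)
    (𝓝 (1 / 2)) := by
  rw [tendsto_iff_norm_sub_tendsto_zero]
  have hid : Tendsto (fun y : ℝ ↦ y) (𝓝[>] 0) (𝓝 0) := tendsto_id.mono_left nhdsWithin_le_nhds
  refine squeeze_zero' (Eventually.of_forall fun _ ↦ norm_nonneg _) ?_ hid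
  filter_upwards [self_mem_nhdsWithin, nhdsWithin_le_nhds (Iio_mem_nhds one_pos)] with y hy0 hy1
  have hy0 : 0 < y := hy0
  have hy1 : y < 1 := hy1
  have := (abs_sinh_cosh_taylor (by rw [abs_of_pos hy0]; exact hy1.le)).2
  rw [show (Real.cosh y - 1) / y ^ 2 - 1 / 2 = (Real.cosh y - 1 - y ^ 2 / 2) / y ^ 2 by
    field_simp, Real.norm_eq_abs, abs_div, abs_of_pos (pow_pos hy0 2), div_le_iff₀ (by positivity)]
  rw [abs_of_pos hy0] at this
  calc _ ≤ _ := this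
    _ = y * y * y ^ 2 := by ring
    _ ≤ y * 1 * y ^ 2 := by gcongr
    _ = y * y ^ 2 := by ring

namespace KoshSeq

variable {p : ℝ} {l : ℕ → ℝ}

theorem summable_kW_div_sq (h : KoshSeq p l) (hp : 0 < p) :
    Summable fun n ↦ kW p (l n) / l n ^ 2 := by
  refine Summable.of_nonneg_of_le (fun n ↦ ?_) (fun n ↦ ?_) summable_four_mul_one_div_sq
  · exact div_nonneg (kW_pos hp _).le (sq_nonneg _)
  · refine le_trans ?_ (h.one_div_sq_le n)
    have := h.pos n
    gcongr
    exact kW_le_one hp _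

/-- The limit `s → 0` of the resolvent expansion. -/
theorem tsum_kW_div_sq (h : KoshSeq p l) (hp : 0 < p) :
    ∑' n, kW p (l n) / l n ^ 2 =
      π ^ 2 / 6 * (1 + 3 / (π * p) * (1 + 1 / (π * p))) / (1 + 1 / (π * p)) ^ 2 := by
  have hpi := Real.pi_pos
  have hs0 : Tendsto (fun s : ℝ ↦ s) (𝓝[>] 0) (𝓝 0) := tendsto_id.mono_left nhdsWithin_le_nhds
  have hleft : Tendsto (fun s : ℝ ↦ ∑' n, kW p (l n) / (l n ^ 2 + s ^ 2)) (𝓝[>] 0)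
      (𝓝 (∑' n, kW p (l n) / l n ^ 2)) := by
    refine tendsto_tsum_of_dominated_convergence (h.summable_kW_div_sq hp) (fun n ↦ ?_)
      (Eventually.of_forall fun s n ↦ ?_)
    · have h1 : Tendsto (fun s : ℝ ↦ l n ^ 2 + s ^ 2) (𝓝[>] 0) (𝓝 (l n ^ 2)) := by
        simpa using (tendsto_const_nhds (x := l n ^ 2)).add (hs0.pow 2)
      exact tendsto_const_nhds.div h1 (pow_pos (h.pos n) 2).ne'
    · have := h.pos n
      have := kW_pos hp (l n)
      rw [Real.norm_of_nonneg (by positivity)]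
      gcongr
      nlinarith [sq_nonneg s]
  set A : ℝ → ℝ := fun s ↦ (Real.sinh (π * s) - π * s) / (π * s) ^ 3 with hA
  set B : ℝ → ℝ := fun s ↦ (Real.cosh (π * s) - 1) / (π * s) ^ 2 with hB
  have hpis : Tendsto (fun s : ℝ ↦ π * s) (𝓝[>] 0) (𝓝[>] 0) := by
    refine tendsto_nhdsWithin_iff.2 ⟨by simpa using hs0.const_mul π, ?_⟩
    filter_upwards [self_mem_nhdsWithin] with s hs using mul_pos hpi hs
  have hAt : Tendsto A (𝓝[>] 0) (𝓝 (1 / 6)) := tendsto_sinh_sub_div.comp hpis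
  have hBt : Tendsto B (𝓝[>] 0) (𝓝 (1 / 2)) := tendsto_cosh_sub_div.comp hpis
  set w := kW p 0 with hw
  have hright : Tendsto (fun s ↦
      (π ^ 3 * p * B s + π ^ 2 + A s * π ^ 4 * s ^ 2 - w * (p * A s * π ^ 3 + B s * π ^ 2)) /
        (2 * (π * p + p * A s * π ^ 3 * s ^ 2 + 1 + B s * π ^ 2 * s ^ 2))) (𝓝[>] 0)
      (𝓝 ((π ^ 3 * p * (1 / 2) + π ^ 2 + 1 / 6 * π ^ 4 * 0 ^ 2 -
        w * (p * (1 / 6) * π ^ 3 + 1 / 2 * π ^ 2)) /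
        (2 * (π * p + p * (1 / 6) * π ^ 3 * 0 ^ 2 + 1 + 1 / 2 * π ^ 2 * 0 ^ 2)))) := by
    refine Tendsto.div ?_ ?_ ?_
    · exact (((hBt.const_mul _).add_const _).add ((hAt.mul_const _).mul (hs0.pow 2))).sub
        ((((hAt.const_mul _).mul_const _).add (hBt.mul_const _)).const_mul _)
    · exact (((((hAt.const_mul _).mul_const _).mul (hs0.pow 2)).const_add _).add_const _ |>.add
        ((hBt.mul_const _).mul (hs0.pow 2))).const_mul _
    · positivity
  have heq : ∀ᶠ s : ℝ in 𝓝[>] 0, (π ^ 3 * p * B s + π ^ 2 + A s * π ^ 4 * s ^ 2 -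
      w * (p * A s * π ^ 3 + B s * π ^ 2)) /
        (2 * (π * p + p * A s * π ^ 3 * s ^ 2 + 1 + B s * π ^ 2 * s ^ 2)) =
      ∑' n, kW p (l n) / (l n ^ 2 + s ^ 2) := by
    filter_upwards [self_mem_nhdsWithin] with s hs
    have hs : 0 < s := hs
    rw [(h.hasSum_resolvent_real hp hs).tsum_eq]
    have hS : Real.sinh (π * s) = π * s + A s * (π * s) ^ 3 := by
      simp only [hA]; field_simp; ring
    have hC : Real.cosh (π * s) = 1 + B s * (π * s) ^ 2 := by
      simp only [hB]; field_simp; ring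
    have hden : p * Real.sinh (π * s) + s * Real.cosh (π * s) =
        s * (π * p + p * A s * π ^ 3 * s ^ 2 + 1 + B s * π ^ 2 * s ^ 2) := by
      rw [hS, hC]; ring
    have hdpos : 0 < p * Real.sinh (π * s) + s * Real.cosh (π * s) := by
      have := Real.cosh_pos (π * s)
      have := Real.sinh_pos_iff.2 (mul_pos hpi hs)
      positivity
    rw [hden] at hdpos
    have hd := pos_of_mul_pos_right hdpos hs.le
    rw [hden, ← hw, hS, hC]
    set d := π * p + p * A s * π ^ 3 * s ^ 2 + 1 + B s * π ^ 2 * s ^ 2 with hd'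
    have hww : w * (π * p + 1) = π * p := by rw [hw, kW_zero hp]; field_simp
    rw [div_eq_div_iff (by positivity) (by positivity)]
    field_simp
    rw [hd']
    linear_combination hww
  rw [tendsto_nhds_unique hleft (hright.congr' heq), hw, kW_zero hp]
  field_simp
  ring

end KoshSeq

/-- With `s² = i a`, `Gfun p a` is the real part of `1 - i` times the deviation from `1` of
`(p cosh πs + s sinh πs) / (p sinh πs + s cosh πs)`. -/
theorem Gfun_eq_re (p : ℝ) {a : ℝ} (ha : 0 < a) {s : ℂ} (hs : s = √(2 * a) / 2 * (1 + I)) :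
    Gfun p a = ((1 - I) * ((p - s) * Complex.exp (-(π * s))) /
      (p * Complex.sinh (π * s) + s * Complex.cosh (π * s))).re := by
  set c := √(2 * a) with hc
  have hac : a = c ^ 2 / 2 := by rw [hc, Real.sq_sqrt (by positivity)]; ring
  set θ := π * c / 2 with hθ
  have h2θ : π * c = 2 * θ := by rw [hθ]; ring
  have hsθ : (π * s : ℂ) = θ + θ * I := by rw [hs, hθ]; push_cast; ring
  set E := Real.exp θ with hE
  set F := Real.exp (-θ) with hF
  set C := Real.cos θ with hC
  set S := Real.sin θ with hS
  have hEF : E * F = 1 := by rw [hE, hF, ← Real.exp_add]; simp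
  have hCS : C ^ 2 + S ^ 2 = 1 := by rw [hC, hS, Real.cos_sq_add_sin_sq]
  -- both sides are written as forms of degree two in `(E, F)` and of degree two in `(C, S)`
  have e1 : Real.cos (π * c) = (C ^ 2 - S ^ 2) * (E * F) := by
    rw [h2θ, Real.cos_two_mul', hEF, mul_one]
  have e2 : Real.sin (π * c) = 2 * S * C * (E * F) := by
    rw [h2θ, Real.sin_two_mul, hEF, mul_one]
  have hE2 : Real.exp (2 * θ) = E ^ 2 * (C ^ 2 + S ^ 2) := by
    rw [hCS, mul_one, hE, ← Real.exp_nat_mul]; norm_num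
  have hF2 : Real.exp (-(2 * θ)) = F ^ 2 * (C ^ 2 + S ^ 2) := by
    rw [hCS, mul_one, hF, ← Real.exp_nat_mul]; norm_num
  have e3 : Real.cosh (π * c) = (E ^ 2 + F ^ 2) / 2 * (C ^ 2 + S ^ 2) := by
    rw [h2θ, Real.cosh_eq, hE2, hF2]; ring
  have e4 : Real.sinh (π * c) = (E ^ 2 - F ^ 2) / 2 * (C ^ 2 + S ^ 2) := by
    rw [h2θ, Real.sinh_eq, hE2, hF2]; ring
  have e5 : Real.exp (-(π * c)) = F ^ 2 * (C ^ 2 + S ^ 2) := by rw [h2θ, hF2]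
  have hch : Real.cosh θ = (E + F) / 2 := Real.cosh_eq θ
  have hsh : Real.sinh θ = (E - F) / 2 := Real.sinh_eq θ
  have c1 : Complex.cosh (π * s) = ((E + F) / 2 * C : ℝ) + ((E - F) / 2 * S : ℝ) * I := by
    rw [hsθ, Complex.cosh_add, Complex.cosh_mul_I, Complex.sinh_mul_I, ← hch, ← hsh, hC, hS]
    push_cast; ring
  have c2 : Complex.sinh (π * s) = ((E - F) / 2 * C : ℝ) + ((E + F) / 2 * S : ℝ) * I := by
    rw [hsθ, Complex.sinh_add, Complex.cosh_mul_I, Complex.sinh_mul_I, ← hch, ← hsh, hC, hS]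
    push_cast; ring
  have c3 : Complex.exp (-(π * s)) = (F * C : ℝ) - (F * S : ℝ) * I := by
    rw [hsθ, neg_add, Complex.exp_add, ← neg_mul, Complex.exp_mul_I, Complex.cos_neg,
      Complex.sin_neg, hF, hC, hS]
    push_cast; ring
  have hs' : s = ((c / 2 : ℝ) : ℂ) + ((c / 2 : ℝ) : ℂ) * I := by rw [hs]; push_cast; ring
  rw [Gfun, ← hc, e1, e2, e3, e4, e5, c1, c2, c3, hs', hac, Complex.div_re, ← add_div]
  simp only [normSq_apply, add_re, add_im, sub_re, sub_im, mul_re, mul_im, ofReal_re, ofReal_im,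
    I_re, I_im, one_re, one_im]
  rw [← mul_div_mul_left _ (_ * _ + _ * _) (two_ne_zero' ℝ)]
  congr 1 <;> ring

theorem KoshSeq.hasSum_kW_mul_kern {p : ℝ} {l : ℕ → ℝ} (h : KoshSeq p l) (hp : 0 < p) {a : ℝ}
    (ha : 0 < a) :
    HasSum (fun n ↦ kW p (l n) * kern a (l n)) (π / (2 * √(2 * a)) * (1 + Gfun p a)) := by
  have hpi := Real.pi_pos
  set c := √(2 * a) with hc
  have hcpos : 0 < c := Real.sqrt_pos.2 (by positivity)
  have hcC : (c : ℂ) ≠ 0 := by exact_mod_cast hcpos.ne'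
  have hcc : c ^ 2 = 2 * a := Real.sq_sqrt (by positivity)
  obtain ⟨s, hs⟩ : ∃ s : ℂ, s = c / 2 * (1 + I) := ⟨_, rfl⟩
  have hs2 : s ^ 2 = a * I := by
    have : (c : ℂ) ^ 2 = 2 * a := by exact_mod_cast hcc
    rw [hs, mul_pow, div_pow, this]
    ring_nf
    simp only [I_sq]
    ring
  have hsre : 0 < s.re := by
    have : s.re = c / 2 := by
      rw [hs, show (c / 2 * (1 + I) : ℂ) = ((c / 2 : ℝ) : ℂ) * (1 + I) by push_cast; rfl,
        re_ofReal_mul]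
      simp
    rw [this]; positivity
  have hs0 : s ≠ 0 := fun h0 ↦ by simp [h0] at hsre
  have h1 := Complex.hasSum_re (h.hasSum_resolvent hp hsre (by rw [hs2]; simp))
  convert! h1 using 1
  · funext n
    rw [kern_eq_re, hs2, ← re_ofReal_mul, mul_one_div]
  · have hden : (p * Complex.sinh (π * s) + s * Complex.cosh (π * s) : ℂ) ≠ 0 := by
      have h2 := kD_ne_zero_of_im hp (z := s * I) (by simpa using hsre.ne')
      rw [kD, ← mul_assoc, Complex.sin_mul_I, Complex.cos_mul_I] at h2
      intro h0
      exact h2 (by linear_combination I * h0)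
    have hinv : 1 / s = (1 - I) / c := by
      have : (1 + I) * (1 - I) = 2 := by ring_nf; rw [I_sq]; norm_num
      rw [div_eq_div_iff hs0 hcC, hs]
      linear_combination -(c / 2 : ℂ) * this
    have hQ : (p * Complex.cosh (π * s) + s * Complex.sinh (π * s)) /
        (p * Complex.sinh (π * s) + s * Complex.cosh (π * s)) =
        1 + (p - s) * Complex.exp (-(π * s)) /
          (p * Complex.sinh (π * s) + s * Complex.cosh (π * s)) := by
      rw [← Complex.cosh_sub_sinh, ← div_self hden, ← add_div]
      congr 1
      ring
    have hval : (π * ((p * Complex.cosh (π * s) + s * Complex.sinh (π * s)) /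
        (p * Complex.sinh (π * s) + s * Complex.cosh (π * s))) - kW p 0 / s) / (2 * s) =
        ((π / (2 * c) : ℝ) : ℂ) * ((1 - I) + (1 - I) * ((p - s) * Complex.exp (-(π * s))) /
          (p * Complex.sinh (π * s) + s * Complex.cosh (π * s))) +
          ((kW p 0 / (2 * a) : ℝ) : ℂ) * I := by
      have haC : (a : ℂ) ≠ 0 := by exact_mod_cast ha.ne'
      have h3 : (kW p 0 : ℂ) / s / (2 * s) = -(((kW p 0 / (2 * a) : ℝ) : ℂ) * I) := by
        rw [div_div, show s * (2 * s) = 2 * s ^ 2 by ring, hs2]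
        push_cast
        rw [← mul_assoc, div_mul_eq_div_div, Complex.div_I]
      rw [sub_div, h3, hQ, div_mul_eq_div_div, div_eq_mul_one_div _ s, hinv]
      push_cast
      ring
    rw [hval, add_re, re_ofReal_mul, re_ofReal_mul, I_re, mul_zero, add_zero, add_re,
      ← Gfun_eq_re p ha hs]
    simp

/-! ### Estimates for the double series -/

theorem abs_one_sub_kW_mul_kern_le {p : ℝ} (hp : 0 < p) {a : ℝ} (ha : 0 < a) {t : ℝ}
    (ht : 0 < t) :
    |kW p t * kern a t - kern a t| ≤ p / π * (1 / a * (1 / ‖(t : ℂ) ^ 2 + a * I‖)) := by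
  have hpi := Real.pi_pos
  have hq := norm_quad_sq a t
  have hqa := le_norm_quad a t
  set q := ‖(t : ℂ) ^ 2 + a * I‖ with hqdef
  have hqpos : 0 < q := by linarith
  have h1 : kW p t * kern a t - kern a t = -((1 - kW p t) * kern a t) := by ring
  have hk : 0 ≤ kern a t := by unfold kern; positivity
  have h2 : 1 - kW p t ≤ p / π / t ^ 2 := by
    have : 1 - kW p t = p / π / (p * (p + 1 / π) + t ^ 2) := by
      rw [kW]; field_simp; ring
    rw [this]
    gcongr
    have : 0 ≤ p * (p + 1 / π) := by positivity
    linarith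
  rw [h1, abs_neg, abs_of_nonneg (mul_nonneg (by linarith [kW_le_one hp t]) hk)]
  calc (1 - kW p t) * kern a t ≤ p / π / t ^ 2 * kern a t := by gcongr
    _ = p / π * (1 / q * (1 / q)) := by
      rw [kern, ← hq]; field_simp
    _ ≤ _ := by gcongr

theorem abs_kern_sub_kern_le {a : ℝ} (ha : 0 < a) (t c : ℝ) :
    |kern a t - kern a c| ≤ |t ^ 2 - c ^ 2| * (1 / a * (1 / ‖(c : ℂ) ^ 2 + a * I‖)) := by
  have h1 := le_norm_quad a t
  have h2 := le_norm_quad a c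
  have n1 : (t : ℂ) ^ 2 + a * I ≠ 0 := norm_pos_iff.1 (by linarith)
  have n2 : (c : ℂ) ^ 2 + a * I ≠ 0 := norm_pos_iff.1 (by linarith)
  rw [kern_eq_re, kern_eq_re, ← sub_re]
  refine (abs_re_le_norm _).trans ?_
  have h3 : 1 / ((t : ℂ) ^ 2 + a * I) - 1 / ((c : ℂ) ^ 2 + a * I) =
      -(((t ^ 2 - c ^ 2 : ℝ) : ℂ) *
        (1 / ((t : ℂ) ^ 2 + a * I) * (1 / ((c : ℂ) ^ 2 + a * I)))) := by
    push_cast; field_simp; ring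
  rw [h3, norm_neg, norm_mul, norm_mul, norm_real, Real.norm_eq_abs, norm_div, norm_div, norm_one]
  gcongr

/-- `λ_{n+1}` approaches `n + 1/2` at the rate `p / (π λ_{n+1})`. -/
theorem KoshSeq.abs_sq_sub_sq_le {p : ℝ} {l : ℕ → ℝ} (h : KoshSeq p l) (hp : 0 < p) (n : ℕ) :
    |l n ^ 2 - ((n : ℝ) + 1 / 2) ^ 2| ≤ 2 * p / π := by
  have hpi := Real.pi_pos
  obtain ⟨h1, h2, h3⟩ := h n
  have hl := h.pos n
  have hn : (0 : ℝ) ≤ n := n.cast_nonneg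
  set d := l n - (n + 1 / 2) with hd
  have hdpos : 0 < d := by linarith
  have htan : Real.tan (π * d) = p / l n := by
    have e1 : π * d = π / 2 - ((n + 1 : ℕ) * π - π * l n) := by rw [hd]; push_cast; ring
    rw [e1, Real.tan_pi_div_two_sub, Real.tan_nat_mul_pi_sub, h3]
    rw [neg_div, neg_neg, inv_div]
  have hle : π * d ≤ p / l n := by
    rw [← htan]
    exact Real.le_tan (by positivity) (by nlinarith)
  rw [le_div_iff₀ hl] at hle
  have hsq : l n ^ 2 - ((n : ℝ) + 1 / 2) ^ 2 = d * (l n + (n + 1 / 2)) := by rw [hd]; ring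
  rw [hsq, abs_of_pos (by positivity), le_div_iff₀ hpi]
  nlinarith [mul_pos hpi hdpos]

theorem KoshSeq.abs_term_le {p : ℝ} {l : ℕ → ℝ} (h : KoshSeq p l) (hp : 0 < p) {a : ℝ}
    (ha : 0 < a) (n : ℕ) :
    |kW p (l n) * kern a (l n) - ∫ u in (n : ℝ)..(n + 1), kern a u| ≤
      (4 * (3 * p / π + 7)) * (1 / ((n : ℝ) + 1) ^ (3 / 2 : ℝ) * (1 / a * (1 / a ^ (1 / 4 : ℝ)))) := by
  have hpi := Real.pi_pos
  have hn : (0 : ℝ) ≤ n := n.cast_nonneg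
  have b1 := abs_one_sub_kW_mul_kern_le hp ha (h.pos n)
  have b2 := abs_kern_sub_kern_le ha (l n) ((n : ℝ) + 1 / 2)
  have b3 := abs_kern_midpoint ha n
  have q1 := one_div_norm_quad_le ha n (h.half_le n)
  have q2 := one_div_norm_quad_le ha n (u := (n : ℝ) + 1 / 2) (by linarith)
  have b4 := h.abs_sq_sub_sq_le hp n
  set Y := 4 * (1 / ((n : ℝ) + 1) ^ (3 / 2 : ℝ)) * (1 / a ^ (1 / 4 : ℝ)) with hY
  set Q1 := ‖((l n : ℝ) : ℂ) ^ 2 + a * I‖ with hQ1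
  set Q2 := ‖(((n : ℝ) + 1 / 2 : ℝ) : ℂ) ^ 2 + a * I‖ with hQ2
  have t1 : |kW p (l n) * kern a (l n) - kern a (l n)| ≤ p / π * (1 / a * Y) := by
    refine b1.trans ?_
    gcongr
  have t2 : |kern a (l n) - kern a ((n : ℝ) + 1 / 2)| ≤ 2 * p / π * (1 / a * Y) := by
    refine b2.trans ?_
    gcongr
  have t3 : |kern a ((n : ℝ) + 1 / 2) - ∫ u in (n : ℝ)..(n + 1), kern a u| ≤ 7 * (1 / a * Y) := by
    refine b3.trans ?_
    rw [show 7 / (a * Q2) = 7 * (1 / a * (1 / Q2)) by rw [one_div_mul_one_div, mul_one_div]]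
    gcongr
  have tri := abs_add_three (kW p (l n) * kern a (l n) - kern a (l n))
    (kern a (l n) - kern a ((n : ℝ) + 1 / 2))
    (kern a ((n : ℝ) + 1 / 2) - ∫ u in (n : ℝ)..(n + 1), kern a u)
  rw [sub_add_sub_cancel, sub_add_sub_cancel] at tri
  refine tri.trans ((add_le_add (add_le_add t1 t2) t3).trans (le_of_eq ?_))
  rw [hY]; ring

open MeasureTheory in
theorem hasSum_intervalIntegral_nat {f : ℝ → ℝ} (hf : IntegrableOn f (Set.Ioi 0)) :
    HasSum (fun n : ℕ ↦ ∫ u in (n : ℝ)..(n + 1), f u) (∫ u in Set.Ioi 0, f u) := by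
  have hU : ⋃ n : ℕ, Set.Ioc (n : ℝ) (n + 1) = Set.Ioi 0 := by
    ext u
    simp only [Set.mem_iUnion, Set.mem_Ioc, Set.mem_Ioi]
    constructor
    · rintro ⟨n, h1, _⟩
      have : (0 : ℝ) ≤ n := n.cast_nonneg
      linarith
    · intro hu
      obtain ⟨n, hn⟩ : ∃ n : ℕ, ⌈u⌉₊ = n + 1 :=
        Nat.exists_eq_succ_of_ne_zero (Nat.ceil_pos.2 hu).ne'
      refine ⟨n, Nat.lt_ceil.1 (by omega), ?_⟩
      have := Nat.le_ceil u
      rw [hn] at this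
      exact_mod_cast this
  have hdis : Pairwise (Function.onFun Disjoint fun n : ℕ ↦ Set.Ioc (n : ℝ) (n + 1)) := by
    have := (Nat.mono_cast (α := ℝ)).pairwise_disjoint_on_Ioc_succ
    simpa using this
  have := hasSum_integral_iUnion (μ := volume) (f := f) (fun _ ↦ measurableSet_Ioc) hdis
    (by rwa [hU])
  rw [hU] at this
  refine this.congr_fun fun n ↦ ?_
  rw [intervalIntegral.integral_of_le (by linarith)]

theorem hasSum_kern_eq_boseReg {x u : ℝ} (hx : 0 < x) (hu : 0 < u) :
    HasSum (fun m : ℕ ↦ 2 / x * kern (2 * π * (m + 1) / x) u) (boseReg (x * u ^ 2) + 1 / 2) := by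
  have := hasSum_boseReg (t := x * u ^ 2) (by positivity)
  convert! this using 1
  funext m
  have : 0 < π := Real.pi_pos
  rw [kern]
  field_simp
  ring

open MeasureTheory in
theorem hasSum_integral_kern {x : ℝ} (hx : 0 < x) (n : ℕ) :
    HasSum (fun m : ℕ ↦ 2 / x * ∫ u in (n : ℝ)..(n + 1), kern (2 * π * (m + 1) / x) u)
      (∫ u in (n : ℝ)..(n + 1), (boseReg (x * u ^ 2) + 1 / 2)) := by
  have hpi := Real.pi_pos
  have hn : (0 : ℝ) ≤ n := n.cast_nonneg
  simp_rw [← intervalIntegral.integral_const_mul]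
  have hb : Summable fun m : ℕ ↦ x * (n + 1) ^ 2 / (8 * π ^ 2) * (4 * (1 / ((m : ℝ) + 1) ^ 2)) :=
    summable_four_mul_one_div_sq.mul_left _
  refine intervalIntegral.hasSum_integral_of_dominated_convergence
    (fun m _ ↦ x * (n + 1) ^ 2 / (8 * π ^ 2) * (4 * (1 / ((m : ℝ) + 1) ^ 2))) (fun m ↦ ?_)
    (fun m ↦ ?_) ?_ ?_ ?_
  · exact ((continuous_kern (by positivity)).const_mul _).aestronglyMeasurable
  · refine ae_of_all _ fun u hu ↦ ?_
    rw [Set.uIoc_of_le (by linarith)] at hu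
    have hu0 : 0 < u := by linarith [hu.1]
    have hk : kern (2 * π * (m + 1) / x) u ≤ (n + 1) ^ 2 / (2 * π * (m + 1) / x) ^ 2 := by
      rw [kern]
      have := hu.2
      gcongr
      have : 0 ≤ u ^ 4 := by positivity
      linarith
    have hk0 : 0 ≤ kern (2 * π * (m + 1) / x) u := by unfold kern; positivity
    rw [Real.norm_of_nonneg (by positivity)]
    calc _ ≤ 2 / x * ((n + 1) ^ 2 / (2 * π * (m + 1) / x) ^ 2) := by gcongr
      _ = _ := by field_simp; norm_num
  · exact ae_of_all _ fun u _ ↦ hb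
  · exact intervalIntegrable_const
  · refine ae_of_all _ fun u hu ↦ ?_
    rw [Set.uIoc_of_le (by linarith)] at hu
    exact hasSum_kern_eq_boseReg hx (by linarith [hu.1])

/-! ### Summation in both orders -/

theorem summable_bound {x : ℝ} (hx : 0 < x) : Summable fun m : ℕ ↦
    1 / (2 * π * ((m : ℝ) + 1) / x) * (1 / (2 * π * ((m : ℝ) + 1) / x) ^ (1 / 4 : ℝ)) := by
  have hpi := Real.pi_pos
  have h1 : Summable fun m : ℕ ↦ 1 / ((m : ℝ) + 1) ^ (5 / 4 : ℝ) := by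
    have := (summable_nat_add_iff 1).2
      (Real.summable_one_div_nat_rpow.2 (by norm_num : (1 : ℝ) < 5 / 4))
    simpa using this
  refine (h1.mul_left (1 / (2 * π / x) ^ (5 / 4 : ℝ))).congr fun m ↦ ?_
  have hm : (0 : ℝ) < (m : ℝ) + 1 := by positivity
  have hb : 0 < 2 * π / x := by positivity
  rw [one_div_mul_one_div, one_div_mul_one_div, ← Real.mul_rpow hb.le hm.le,
    show 2 * π * ((m : ℝ) + 1) / x = 2 * π / x * (m + 1) by ring]
  congr 1
  rw [show (5 / 4 : ℝ) = 1 + 1 / 4 by norm_num, Real.rpow_add (by positivity), Real.rpow_one]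

/-- The double series comparing, for each pole `±2πi(m+1)` of the Bose function, the weighted
sum over the `λ_n` with an integral; summing it in both orders gives the identity. -/
theorem KoshSeq.summable_term {p : ℝ} {l : ℕ → ℝ} (h : KoshSeq p l) (hp : 0 < p) {x : ℝ}
    (hx : 0 < x) : Summable fun nm : ℕ × ℕ ↦
      2 / x * (kW p (l nm.1) * kern (2 * π * (nm.2 + 1) / x) (l nm.1) -
        ∫ u in (nm.1 : ℝ)..(nm.1 + 1), kern (2 * π * (nm.2 + 1) / x) u) := by
  have hpi := Real.pi_pos
  refine Summable.mul_left _ ?_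
  have h1 : Summable fun n : ℕ ↦ 1 / ((n : ℝ) + 1) ^ (3 / 2 : ℝ) := by
    have := (summable_nat_add_iff 1).2
      (Real.summable_one_div_nat_rpow.2 (by norm_num : (1 : ℝ) < 3 / 2))
    simpa using this
  have h2 := (h1.mul_of_nonneg (summable_bound hx) (fun n ↦ by positivity)
    (fun m ↦ by positivity)).mul_left (4 * (3 * p / π + 7))
  exact Summable.of_norm_bounded h2 fun nm ↦ h.abs_term_le hp (by positivity) nm.1

theorem KoshSeq.hasSum_column {p : ℝ} {l : ℕ → ℝ} (h : KoshSeq p l) (hp : 0 < p) {x : ℝ}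
    (hx : 0 < x) (m : ℕ) : HasSum (fun n : ℕ ↦
      2 / x * (kW p (l n) * kern (2 * π * (m + 1) / x) (l n) -
        ∫ u in (n : ℝ)..(n + 1), kern (2 * π * (m + 1) / x) u))
      (1 / 2 * √(π / x) * (1 / √(m + 1) * Gfun p (2 * π * (m + 1) / x))) := by
  have hpi := Real.pi_pos
  have ha : 0 < 2 * π * ((m : ℝ) + 1) / x := by positivity
  obtain ⟨hi, hiv⟩ := integral_kern ha
  have h1 := ((h.hasSum_kW_mul_kern hp ha).sub (hasSum_intervalIntegral_nat hi)).mul_left (2 / x)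
  convert! h1 using 1
  rw [hiv]
  have hs : √(2 * (2 * π * ((m : ℝ) + 1) / x)) = 2 * (√(π / x) * √(m + 1)) := by
    rw [← Real.sqrt_mul (by positivity),
      show 2 * (2 * π * ((m : ℝ) + 1) / x) = 2 ^ 2 * (π / x * (m + 1)) by ring,
      Real.sqrt_mul (by positivity), Real.sqrt_sq (by norm_num)]
  have hπx : π / x = √(π / x) ^ 2 := (Real.sq_sqrt (by positivity)).symm
  have hr : 0 < √(π / x) := Real.sqrt_pos.2 (by positivity)
  have hm : 0 < √((m : ℝ) + 1) := Real.sqrt_pos.2 (by positivity)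
  rw [hs]
  generalize Gfun p (2 * π * (m + 1) / x) = g
  have h2 : 2 / x * (π / (2 * (2 * (√(π / x) * √((m : ℝ) + 1))))) =
      π / x * (1 / 2 * (1 / √(π / x)) * (1 / √((m : ℝ) + 1))) := by
    field_simp
  have h3 : 2 / x * (π / (2 * (2 * (√(π / x) * √((m : ℝ) + 1)))) * (1 + g) -
      π / (2 * (2 * (√(π / x) * √((m : ℝ) + 1))))) =
      2 / x * (π / (2 * (2 * (√(π / x) * √((m : ℝ) + 1))))) * g := by ring
  rw [h3, h2]
  nth_rewrite 2 [hπx]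
  field_simp

theorem KoshSeq.hasSum_row {p : ℝ} {l : ℕ → ℝ} (h : KoshSeq p l) {x : ℝ}
    (hx : 0 < x) (n : ℕ) : HasSum (fun m : ℕ ↦
      2 / x * (kW p (l n) * kern (2 * π * (m + 1) / x) (l n) -
        ∫ u in (n : ℝ)..(n + 1), kern (2 * π * (m + 1) / x) u))
      (kW p (l n) * boseReg (x * l n ^ 2) - (1 - kW p (l n)) / 2 -
        ∫ u in (n : ℝ)..(n + 1), boseReg (x * u ^ 2)) := by
  have h1 := ((hasSum_kern_eq_boseReg hx (h.pos n)).mul_left (kW p (l n))).sub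
    (hasSum_integral_kern hx n)
  have hint : IntervalIntegrable (fun u ↦ boseReg (x * u ^ 2)) MeasureTheory.volume
      (n : ℝ) (n + 1) := by
    rw [intervalIntegrable_iff_integrableOn_Ioc_of_le (by linarith)]
    refine (integral_boseReg_sq hx).1.mono_set fun u hu ↦ ?_
    have : (0 : ℝ) ≤ n := n.cast_nonneg
    exact lt_of_le_of_lt this hu.1
  rw [intervalIntegral.integral_add hint intervalIntegrable_const,
    intervalIntegral.integral_const] at h1
  convert! h1 using 1
  · funext m; ring
  · rw [smul_eq_mul]; ring

theorem KoshSeq.hasSum_kW_mul_boseReg {p : ℝ} {l : ℕ → ℝ} (h : KoshSeq p l) (hp : 0 < p) {x : ℝ}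
    (hx : 0 < x) : HasSum (fun n ↦ kW p (l n) * boseReg (x * l n ^ 2))
      (1 / 2 * √(π / x) * ∑' m : ℕ, (1 / √(m + 1) * Gfun p (2 * π * (m + 1) / x)) +
        kW p 0 / 4 + 1 / 2 * √(π / x) * (riemannZeta (1 / 2)).re) := by
  have hS := (h.summable_term hp hx).hasSum
  have hrow := hS.prod_fiberwise fun n ↦ h.hasSum_row hx n
  have hcol := ((Equiv.prodComm ℕ ℕ).hasSum_iff.2 hS).prod_fiberwise
    fun m ↦ h.hasSum_column hp hx m
  rw [← hcol.tsum_eq, tsum_mul_left] at hrow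
  obtain ⟨hi, hiv⟩ := integral_boseReg_sq hx
  have h2 := (hrow.add ((h.hasSum_one_sub_kW hp).div_const 2)).add
    (hasSum_intervalIntegral_nat hi)
  rw [hiv] at h2
  convert! h2 using 1
  · funext n; ring
  · ring

theorem ramanujan_zeta_half_koshliakov
    (p : ℝ) (hp : 0 < p) (lam : ℕ → ℝ)
    (hlam : ∀ n : ℕ, 1 ≤ n → (n : ℝ) - 1 / 2 < lam n ∧ lam n < n ∧
      Real.tan (Real.pi * lam n) = -(lam n) / p)
    (x : ℝ) (hx : 0 < x) :
    (∑' n : ℕ, (p ^ 2 + lam (n + 1) ^ 2) / (p * (p + 1 / Real.pi) + lam (n + 1) ^ 2) /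
        (Real.exp (lam (n + 1) ^ 2 * x) - 1)) =
      1 / (4 * (1 + 1 / (Real.pi * p)))
      + Real.pi ^ 2 / (6 * x) *
          (1 + 3 / (Real.pi * p) * (1 + 1 / (Real.pi * p))) / (1 + 1 / (Real.pi * p)) ^ 2
      + 1 / 2 * Real.sqrt (Real.pi / x) * (riemannZeta (1 / 2)).re
      + 1 / 2 * Real.sqrt (Real.pi / x) *
          ∑' n : ℕ, (1 / Real.sqrt (n + 1)) * Gfun p (2 * Real.pi * (n + 1) / x) := by
  have hpi := Real.pi_pos
  have h : KoshSeq p (fun n ↦ lam (n + 1)) := fun n ↦ by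
    obtain ⟨h1, h2, h3⟩ := hlam (n + 1) (by omega)
    push_cast at h1 h2
    exact ⟨by linarith, h2, h3⟩
  have hsum := (h.hasSum_kW_mul_boseReg hp hx).add
    ((h.summable_kW_div_sq hp).hasSum.mul_left (1 / x))
  rw [h.tsum_kW_div_sq hp, KoshSeq.kW_zero hp] at hsum
  have hterm : ∀ n : ℕ, (p ^ 2 + lam (n + 1) ^ 2) / (p * (p + 1 / π) + lam (n + 1) ^ 2) /
      (Real.exp (lam (n + 1) ^ 2 * x) - 1) =
      kW p (lam (n + 1)) * boseReg (x * lam (n + 1) ^ 2) +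
        1 / x * (kW p (lam (n + 1)) / lam (n + 1) ^ 2) := fun n ↦ by
    rw [boseReg, mul_comm x, kW, div_eq_mul_one_div _ (Real.exp _ - 1)]
    have := h.pos n
    ring
  simp_rw [hterm]
  rw [hsum.tsum_eq]
  generalize ∑' m : ℕ, (1 / √((m : ℝ) + 1) * Gfun p (2 * π * (m + 1) / x)) = g
  have e1 : π * p / (π * p + 1) / 4 = 1 / (4 * (1 + 1 / (π * p))) := by field_simp
  have e2 : ∀ y z : ℝ, 1 / x * (π ^ 2 / 6 * y / z) = π ^ 2 / (6 * x) * y / z := fun y z ↦ by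
    field_simp
  rw [e1, e2]
  ring
end

section
/- Let p > 0, let λ be a Koshliakov sequence for p, and let x > 0 with x ≠ p. Then ∑_{n=1}^∞ w_n/(x² + λ_n²) = π/(2x) − (1/(1 + 1/(πp)))·1/(2x²) + (π/x)·1/(σ(x)·e^{2πx} − 1). -/
/-!
The proof diagonalises a compact operator on `ℓ²` whose eigenvalues are the numbers `1 / λₙ²`,
and reads the expansion off the Parseval identity.

For real `t` let `U t = (k / (t - k²))ₖ` in `ℓ²` and `m t = ∑ₖ t / (t - k²)`, so that
`1 + 2 m(z²) = π z cot (π z)` by the Mittag-Leffler expansion of the cotangent. Partial fractions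
give `(s - t) ⟪U s, U t⟫ = m t - m s` (`inner_U`), and in the limit `-‖U t‖²` is the derivative of `m`
(`hasDerivAt_m`).

Put `c = (π p + 1) / 2`. The equation `tan (π λ) = -λ / p` forces `m (λ²) = -c` (`m_eq_of_tan`), so
the vectors `U (λₙ²)` are pairwise orthogonal. They are complete: for the compact symmetric
operator `T = diag (1 / k²) + c⁻¹ (U 0) (U 0)ᵀ`, every eigenvector is a multiple of some `U t` with
`t > 0` and `m t = -c` (`eigenvector_T`), and since `m` is injective between consecutive squares
(`eq_of_m_eq`) such a `t` is one of the `λₙ²`. By the spectral theorem the eigenvectors span a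
dense subspace (`IsKoshliakov.orthogonal_eq_bot`).

All the inner products in the Parseval identity for `U (-x²)` and `U 0` are known from `inner_U`, and
`‖U (λₙ²)‖²` from differentiating `π z cot (π z)`. With `q = p (p + 1 / π)` this evaluates
`∑ 1 / ((x² + λₙ²) (q + λₙ²))` (`IsKoshliakov.hasSum_parseval`). Multiplying by `x²` and letting
`x → ∞` evaluates `∑ 1 / (q + λₙ²)` (`IsKoshliakov.hasSum_inv`). As
`p² + λₙ² = (x² + λₙ²) + (p² - x²)`, the series of the theorem is the second sum plus `p² - x²`
times the first.
-/

namespace Koshliakov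

open Filter Topology

noncomputable section

/-! ### The vectors `U t` and the function `m` -/

/-- The Hilbert space `ℓ²(ℕ, ℝ)`; the index `j` stands for the positive integer `k = j + 1`. -/
abbrev H : Type := lp (fun _ : ℕ => ℝ) 2

/-- `t` is not one of the squares `1, 4, 9, …`, the poles of `m`. -/
def Nonsquare (t : ℝ) : Prop := ∀ j : ℕ, t ≠ ((j : ℝ) + 1) ^ 2

/-- The meromorphic function `m(t) = ∑ₖ t / (t - k²)`, so that `π z cot (π z) = 1 + 2 m(z²)`. -/
def m (t : ℝ) : ℝ := ∑' j : ℕ, t / (t - ((j : ℝ) + 1) ^ 2)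

/-- The inverses of `t / k² - 1` are bounded uniformly in `k`, as they tend to `-1`. For `t = k²`
the corresponding term is `0⁻¹ = 0`. -/
lemma exists_bound (t : ℝ) : ∃ C : ℝ, 0 < C ∧ ∀ j : ℕ, |(t / ((j : ℝ) + 1) ^ 2 - 1)⁻¹| ≤ C := by
  have h1 : Tendsto (fun j : ℕ => (t / ((j : ℝ) + 1) ^ 2 - 1)⁻¹) atTop (𝓝 ((0 - 1 : ℝ)⁻¹)) := by
    refine Tendsto.inv₀ (Tendsto.sub_const (tendsto_const_nhds.div_atTop ?_) _) (by norm_num)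
    exact (tendsto_pow_atTop (by norm_num)).comp
      (tendsto_atTop_add_const_right _ _ tendsto_natCast_atTop_atTop)
  obtain ⟨C, hC⟩ := (Metric.isBounded_range_of_tendsto _ h1).exists_norm_le
  exact ⟨max C 1, by positivity, fun j => le_max_of_le_left (hC _ ⟨j, rfl⟩)⟩

lemma summable_inv_sq : Summable fun j : ℕ => 1 / ((j : ℝ) + 1) ^ 2 := by
  have := (summable_nat_add_iff 1).2 (Real.summable_one_div_nat_pow.2 (one_lt_two))
  simpa using this

lemma inv_sub_sq (t : ℝ) (j : ℕ) : (t - ((j : ℝ) + 1) ^ 2)⁻¹ =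
    (1 / ((j : ℝ) + 1) ^ 2) * (t / ((j : ℝ) + 1) ^ 2 - 1)⁻¹ := by
  have : (t - ((j : ℝ) + 1) ^ 2) = ((j : ℝ) + 1) ^ 2 * (t / ((j : ℝ) + 1) ^ 2 - 1) := by
    field_simp
  rw [this, mul_inv, one_div]

lemma memℓp_vec (t : ℝ) :
    Memℓp (fun j : ℕ => ((j : ℝ) + 1) / (t - ((j : ℝ) + 1) ^ 2)) 2 := by
  obtain ⟨C, hC, h⟩ := exists_bound t
  refine memℓp_gen ?_
  simp only [ENNReal.toReal_ofNat, Real.rpow_ofNat, Real.norm_eq_abs, sq_abs]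
  refine Summable.of_nonneg_of_le (fun _ => sq_nonneg _) (fun j => ?_)
    (summable_inv_sq.mul_left (C ^ 2))
  have h2 : (t / ((j : ℝ) + 1) ^ 2 - 1)⁻¹ ^ 2 ≤ C ^ 2 := sq_le_sq' (by
    linarith [neg_abs_le (t / ((j : ℝ) + 1) ^ 2 - 1)⁻¹, h j]) ((le_abs_self _).trans (h j))
  rw [div_eq_mul_inv, inv_sub_sq]
  calc _ = (t / ((j : ℝ) + 1) ^ 2 - 1)⁻¹ ^ 2 * (1 / ((j : ℝ) + 1) ^ 2) := by field_simp
    _ ≤ _ := by gcongr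

/-- The vector `(k / (t - k²))ₖ` of `ℓ²`. At the values `t = k²` the `k`-th coordinate is `0`. -/
def U (t : ℝ) : H := ⟨fun j : ℕ => ((j : ℝ) + 1) / (t - ((j : ℝ) + 1) ^ 2), memℓp_vec t⟩

lemma U_apply (t : ℝ) (j : ℕ) : U t j = ((j : ℝ) + 1) / (t - ((j : ℝ) + 1) ^ 2) := rfl

lemma U_zero_apply (j : ℕ) : U 0 j = -(1 / ((j : ℝ) + 1)) := by
  rw [U_apply]; field_simp; ring_nf

lemma summable_m (t : ℝ) : Summable fun j : ℕ => t / (t - ((j : ℝ) + 1) ^ 2) := by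
  obtain ⟨C, hC, h⟩ := exists_bound t
  refine Summable.of_norm_bounded (summable_inv_sq.mul_left (|t| * C)) fun j => ?_
  rw [div_eq_mul_inv, inv_sub_sq, norm_mul, norm_mul, Real.norm_eq_abs, Real.norm_eq_abs,
    Real.norm_eq_abs, abs_of_nonneg (show 0 ≤ 1 / ((j : ℝ) + 1) ^ 2 by positivity)]
  calc _ ≤ |t| * (1 / ((j : ℝ) + 1) ^ 2 * C) := by gcongr; exact h j
    _ = _ := by ring

lemma hasSum_inner_H (f g : H) : HasSum (fun j : ℕ => f j * g j) (inner ℝ f g) := by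
  have h : (fun j : ℕ => f j * g j) = fun j : ℕ => inner ℝ (f j) (g j) := by
    funext j; exact mul_comm _ _
  rw [h]
  exact lp.hasSum_inner (𝕜 := ℝ) f g

lemma hasSum_inner (s t : ℝ) : HasSum (fun j : ℕ => ((j : ℝ) + 1) ^ 2 /
    ((s - ((j : ℝ) + 1) ^ 2) * (t - ((j : ℝ) + 1) ^ 2))) (inner ℝ (U s) (U t)) := by
  have h := hasSum_inner_H (U s) (U t)
  simp only [U_apply, div_mul_div_comm, ← sq] at h
  exact h

lemma m_zero : m 0 = 0 := by simp [m]

lemma nonsquare_of_nonpos {t : ℝ} (ht : t ≤ 0) : Nonsquare t := fun j h => by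
  have : (0 : ℝ) < ((j : ℝ) + 1) ^ 2 := by positivity
  linarith

/-- Partial fractions turn inner products of the vectors `U t` into difference quotients of `m`. -/
lemma inner_U {s t : ℝ} (hs : Nonsquare s) (ht : Nonsquare t) :
    (s - t) * inner ℝ (U s) (U t) = m t - m s := by
  refine ((hasSum_inner s t).mul_left (s - t)).unique ?_
  have h := (summable_m t).hasSum.sub (summable_m s).hasSum
  refine (congrArg (fun f : ℕ → ℝ => HasSum f (m t - m s)) (funext fun j => ?_)).mpr h
  have h1 := sub_ne_zero.2 (hs j)
  have h2 := sub_ne_zero.2 (ht j)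
  field_simp
  ring

/-- Termwise differentiation of `m`; the derivative of `t / (t - k²)` is `-k² / (t - k²)²`. -/
lemma hasDerivAt_m {t : ℝ} (ht : Nonsquare t) : HasDerivAt m (-‖U t‖ ^ 2) t := by
  obtain ⟨C, hC, h⟩ := exists_bound t
  -- on the ball of radius `1 / (2C)` around `t` one has `|y / k² - 1| ≥ 1 / (2C)` for all `k`
  have hb : ∀ y ∈ Metric.ball t (1 / (2 * C)), ∀ j : ℕ,
      1 / (2 * C) ≤ |y / ((j : ℝ) + 1) ^ 2 - 1| := by
    intro y hy j
    rw [Metric.mem_ball, Real.dist_eq] at hy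
    have hk : (1 : ℝ) ≤ ((j : ℝ) + 1) ^ 2 := one_le_pow₀ (by linarith [Nat.cast_nonneg (α := ℝ) j])
    have hne : t / ((j : ℝ) + 1) ^ 2 - 1 ≠ 0 := by
      intro h0
      have : t / ((j : ℝ) + 1) ^ 2 = 1 := by linarith
      exact ht j ((div_eq_one_iff_eq (by positivity)).1 this)
    have h1 : 1 / C ≤ |t / ((j : ℝ) + 1) ^ 2 - 1| := by
      have := h j
      rw [abs_inv] at this
      rw [div_le_iff₀ hC]
      exact (inv_le_iff_one_le_mul₀' (abs_pos.2 hne)).1 this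
    have h2 : |(y - t) / ((j : ℝ) + 1) ^ 2| ≤ 1 / (2 * C) := by
      rw [abs_div, abs_of_pos (show (0 : ℝ) < ((j : ℝ) + 1) ^ 2 by positivity)]
      exact (div_le_self (abs_nonneg _) hk).trans hy.le
    have h3 : t / ((j : ℝ) + 1) ^ 2 - 1 =
        (y / ((j : ℝ) + 1) ^ 2 - 1) - (y - t) / ((j : ℝ) + 1) ^ 2 := by
      ring
    have h4 := abs_sub (y / ((j : ℝ) + 1) ^ 2 - 1) ((y - t) / ((j : ℝ) + 1) ^ 2)
    rw [← h3] at h4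
    have : 1 / C = 1 / (2 * C) + 1 / (2 * C) := by field_simp; norm_num
    linarith
  have hne : ∀ y ∈ Metric.ball t (1 / (2 * C)), ∀ j : ℕ, y - ((j : ℝ) + 1) ^ 2 ≠ 0 := by
    intro y hy j h0
    have h1 := hb y hy j
    rw [sub_eq_zero.1 h0, div_self (by positivity), sub_self, abs_zero] at h1
    have : 0 < 1 / (2 * C) := by positivity
    linarith
  have hmem : t ∈ Metric.ball t (1 / (2 * C)) := Metric.mem_ball_self (by positivity)
  have key := hasDerivAt_tsum_of_isPreconnected
    (g := fun (j : ℕ) (y : ℝ) => y / (y - ((j : ℝ) + 1) ^ 2))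
    (g' := fun (j : ℕ) (y : ℝ) => -(((j : ℝ) + 1) ^ 2 /
      ((y - ((j : ℝ) + 1) ^ 2) * (y - ((j : ℝ) + 1) ^ 2))))
    (summable_inv_sq.mul_left ((2 * C) ^ 2)) Metric.isOpen_ball
    (convex_ball t (1 / (2 * C))).isPreconnected ?_ ?_ hmem (summable_m t) hmem
  · rw [tsum_neg, (hasSum_inner t t).tsum_eq, real_inner_self_eq_norm_sq] at key
    exact key
  · intro j y hy
    have h0 := hne y hy j
    refine ((hasDerivAt_id y).div ((hasDerivAt_id y).sub_const (((j : ℝ) + 1) ^ 2))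
      h0).congr_deriv ?_
    simp only [id]
    field_simp
    ring
  · intro j y hy
    have h0 := hne y hy j
    have hk : (0 : ℝ) < ((j : ℝ) + 1) ^ 2 := by positivity
    have h1 : |(y / ((j : ℝ) + 1) ^ 2 - 1)⁻¹| ≤ 2 * C := by
      rw [abs_inv]
      have := inv_anti₀ (by positivity) (hb y hy j)
      simpa using this
    have h2 : (y / ((j : ℝ) + 1) ^ 2 - 1)⁻¹ ^ 2 ≤ (2 * C) ^ 2 := by
      rw [← sq_abs]; gcongr
    rw [norm_neg, Real.norm_eq_abs, abs_of_nonneg (div_nonneg hk.le (mul_self_nonneg _)),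
      div_eq_mul_inv, mul_inv, inv_sub_sq]
    calc _ = (y / ((j : ℝ) + 1) ^ 2 - 1)⁻¹ ^ 2 * (1 / ((j : ℝ) + 1) ^ 2) := by field_simp
      _ ≤ _ := by gcongr

/-- The Mittag-Leffler expansion of the cotangent. It is stated for complex `z` with real square so
as to cover both real and purely imaginary `z`. -/
lemma cot_eq_m {z : ℂ} (hz : z ∈ Complex.integerComplement) {t : ℝ} (hzt : z ^ 2 = t) :
    Real.pi * z * Complex.cot (Real.pi * z) = 1 + 2 * (m t : ℂ) := by
  have h0 : z ≠ 0 := Complex.integerComplement.ne_zero hz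
  have h := cot_series_rep' hz
  have h1 : (2 * (m t : ℂ)) = z * ∑' n : ℕ, (1 / (z - (n + 1)) + 1 / (z + (n + 1))) := by
    rw [m, Complex.ofReal_tsum, ← tsum_mul_left, ← tsum_mul_left]
    refine tsum_congr fun n => ?_
    have := cotTerm_identity hz n
    unfold cotTerm at this
    rw [this]
    push_cast
    rw [← hzt]
    rw [show (z + (n + 1)) * (z - (n + 1)) = z ^ 2 - (n + 1) ^ 2 by ring]
    ring
  rw [h1, ← h]
  field_simp
  ring

/-! ### The compact operator -/

/-- The unit coordinate vectors of `ℓ²`. -/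
def δ (j : ℕ) : H := lp.single 2 j (1 : ℝ)

lemma inner_δ (j : ℕ) (f : H) : inner ℝ (δ j) f = f j := by
  have := lp.inner_single_left (𝕜 := ℝ) (G := fun _ : ℕ => ℝ) j (1 : ℝ) f
  rw [δ, this]
  simp

lemma norm_δ (j : ℕ) : ‖δ j‖ = 1 := by
  have h : ‖δ j‖ ^ 2 = 1 := by
    rw [← real_inner_self_eq_norm_sq, inner_δ, δ, lp.single_apply_self]
  nlinarith [norm_nonneg (δ j)]

lemma summable_D : Summable fun j : ℕ =>
    (1 / ((j : ℝ) + 1) ^ 2) • InnerProductSpace.rankOne ℝ (δ j) (δ j) := by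
  refine Summable.of_norm (summable_inv_sq.congr fun j => ?_)
  rw [norm_smul, InnerProductSpace.norm_rankOne, norm_δ, Real.norm_eq_abs,
    abs_of_nonneg (by positivity)]
  ring

/-- The diagonal operator `diag (1 / k²)`, as a norm-convergent sum of rank one operators. -/
def D : H →L[ℝ] H :=
  ∑' j : ℕ, (1 / ((j : ℝ) + 1) ^ 2) • InnerProductSpace.rankOne ℝ (δ j) (δ j)

lemma D_apply (f : H) (j : ℕ) : D f j = f j / ((j : ℝ) + 1) ^ 2 := by
  have h1 := summable_D.hasSum.mapL (ContinuousLinearMap.apply ℝ H f)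
  have h2 := h1.mapL (innerSL ℝ (δ j))
  have h3 : innerSL ℝ (δ j) (ContinuousLinearMap.apply ℝ H f D) = D f j := inner_δ j (D f)
  rw [← h3]
  refine h2.unique ((congrArg (fun g : ℕ → ℝ => HasSum g (f j / ((j : ℝ) + 1) ^ 2))
    (funext fun i => ?_)).mpr (hasSum_ite_eq j (f j / ((j : ℝ) + 1) ^ 2)))
  have : innerSL ℝ (δ j) (ContinuousLinearMap.apply ℝ H f
      ((1 / ((i : ℝ) + 1) ^ 2) • InnerProductSpace.rankOne ℝ (δ i) (δ i)))
      = (1 / ((i : ℝ) + 1) ^ 2) * (f i * δ i j) := by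
    simp [inner_δ]
  rw [this]
  split_ifs with hij
  · subst hij
    rw [δ, lp.single_apply_self]; ring
  · rw [δ, lp.single_apply_ne _ _ _ (Ne.symm hij)]; ring

lemma isCompact_rankOne (f g : H) : IsCompactOperator (InnerProductSpace.rankOne ℝ f g) := by
  have h := (isCompactOperator_id_iff_finiteDimensional (𝕜 := ℝ) (E := ℝ)).2 inferInstance
  have h2 := (h.comp_clm (innerSL ℝ g)).clm_comp (ContinuousLinearMap.toSpanSingleton ℝ f)
  exact h2

lemma isCompact_D : IsCompactOperator D := by
  refine isCompactOperator_of_tendsto summable_D.hasSum (Eventually.of_forall fun s => ?_)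
  exact (compactOperator (RingHom.id ℝ) H H).sum_mem
    (t := s) (f := fun j : ℕ => (1 / ((j : ℝ) + 1) ^ 2) •
      InnerProductSpace.rankOne ℝ (δ j) (δ j))
    fun j _ => (compactOperator (RingHom.id ℝ) H H).smul_mem _ (isCompact_rankOne _ _)

/-- The operator `diag (1 / k²) + c⁻¹ e eᵀ` with `e = U 0 = (-1 / k)ₖ`. -/
def T (c : ℝ) : H →L[ℝ] H := D + c⁻¹ • InnerProductSpace.rankOne ℝ (U 0) (U 0)

lemma T_apply (c : ℝ) (f : H) (j : ℕ) :
    T c f j = f j / ((j : ℝ) + 1) ^ 2 - c⁻¹ * inner ℝ (U 0) f / ((j : ℝ) + 1) := by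
  have : T c f j = D f j + c⁻¹ * (inner ℝ (U 0) f * U 0 j) := rfl
  rw [this, D_apply, U_zero_apply]
  ring

lemma isCompact_T (c : ℝ) : IsCompactOperator (T c) :=
  isCompact_D.add ((isCompact_rankOne _ _).smul _)

lemma hasSum_inner_D (f g : H) :
    HasSum (fun j : ℕ => f j * g j / ((j : ℝ) + 1) ^ 2) (inner ℝ (D f) g) := by
  have h := hasSum_inner_H (D f) g
  simp only [D_apply] at h
  convert h using 1
  funext j
  ring

lemma inner_T (c : ℝ) (f g : H) :
    inner ℝ (T c f) g = inner ℝ (D f) g + c⁻¹ * (inner ℝ (U 0) f * inner ℝ (U 0) g) := by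
  have : T c f = D f + c⁻¹ • (inner ℝ (U 0) f • U 0) := rfl
  rw [this, inner_add_left, real_inner_smul_left, real_inner_smul_left]

lemma isSymmetric_T (c : ℝ) : (T c : H →ₗ[ℝ] H).IsSymmetric := by
  intro f g
  have h1 : inner ℝ (D f) g = inner ℝ (D g) f := by
    refine (hasSum_inner_D f g).unique ?_
    simpa only [mul_comm] using hasSum_inner_D g f
  have h2 := inner_T c f g
  have h3 := inner_T c g f
  change inner ℝ (T c f) g = inner ℝ f (T c g)
  rw [h2, real_inner_comm (T c g) f, h3, h1]
  ring

lemma inner_T_pos {c : ℝ} (hc : 0 < c) {f : H} (hf : f ≠ 0) : 0 < inner ℝ (T c f) f := by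
  rw [inner_T]
  have h : 0 < inner ℝ (D f) f := by
    obtain ⟨j, hj⟩ : ∃ j, f j ≠ 0 := by
      by_contra! h
      exact hf (lp.ext (funext h))
    have hs := hasSum_inner_D f f
    rw [← hs.tsum_eq]
    refine hs.summable.tsum_pos (fun i => ?_) j ?_
    · exact div_nonneg (mul_self_nonneg _) (by positivity)
    · exact div_pos (mul_self_pos.2 hj) (by positivity)
  have : 0 ≤ c⁻¹ * (inner ℝ (U 0) f * inner ℝ (U 0) f) :=
    mul_nonneg (inv_nonneg.2 hc.le) (mul_self_nonneg _)
  linarith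

/-- In coordinates, `T c f = t⁻¹ f` reads `fₖ (t - k²) = c⁻¹ ⟪U 0, f⟫ t k`, so `f` is a multiple of
`U t` unless `t` is a square; pairing with `U 0` then gives `m t = -c`. -/
lemma eigenvector_T {c : ℝ} (hc : 0 < c) {f : H} (hf : f ≠ 0) {ν : ℝ} (hT : T c f = ν • f) :
    ∃ t, 0 < t ∧ Nonsquare t ∧ m t = -c ∧ ∃ a : ℝ, f = a • U t := by
  have hν : 0 < ν := by
    have h := inner_T_pos hc hf
    rw [hT, real_inner_smul_left, real_inner_self_eq_norm_sq] at h
    exact pos_of_mul_pos_left h (sq_nonneg _)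
  set s : ℝ := inner ℝ (U 0) f with hs
  set t : ℝ := ν⁻¹ with ht
  have htpos : 0 < t := inv_pos.2 hν
  have hνt : ν = t⁻¹ := by rw [ht, inv_inv]
  -- the eigenvalue equation in coordinates
  have hco : ∀ j : ℕ, f j * (t - ((j : ℝ) + 1) ^ 2) = c⁻¹ * s * t * ((j : ℝ) + 1) := by
    intro j
    have h1 : T c f j = ν * f j := by rw [hT]; rfl
    rw [T_apply, ← hs, hνt] at h1
    have hk : ((j : ℝ) + 1) ≠ 0 := by positivity
    have hc' := hc.ne'
    have ht' := htpos.ne'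
    field_simp at h1 ⊢
    linarith
  have hns : Nonsquare t := by
    intro j hj
    have h1 := hco j
    rw [hj, sub_self, mul_zero] at h1
    -- if `t = (j + 1)²`, then `⟪U 0, f⟫ = 0` and `f` is supported at `j`, hence `f = 0`
    have hs0 : s = 0 := by
      have hk : ((j : ℝ) + 1) ≠ 0 := by positivity
      have hc' := hc.ne'
      field_simp at h1
      simpa [hk] using h1.symm
    have h2 : ∀ i, i ≠ j → f i = 0 := by
      intro i hij
      have h3 := hco i
      rw [hs0] at h3
      have h4 : t - ((i : ℝ) + 1) ^ 2 ≠ 0 := by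
        rw [hj, sub_ne_zero]
        intro h5
        have h6 := (sq_eq_sq₀ (by positivity) (by positivity)).1 h5
        exact hij (by exact_mod_cast (add_right_cancel h6).symm)
      simpa [h4] using h3
    have h3 : s = U 0 j * f j := by
      refine (hasSum_inner_H (U 0) f).unique (hasSum_single j fun i hi => ?_)
      rw [h2 i hi, mul_zero]
    rw [hs0, U_zero_apply] at h3
    have h4 : f j = 0 := by
      have hk : ((j : ℝ) + 1) ≠ 0 := by positivity
      have := (mul_eq_zero.1 h3.symm).resolve_left (by simpa using hk)
      exact this
    exact hf (lp.ext (funext fun i => by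
      by_cases hi : i = j
      · rw [hi]; exact h4
      · exact h2 i hi))
  have hfa : f = (c⁻¹ * s * t) • U t := by
    refine lp.ext (funext fun j => ?_)
    change f j = c⁻¹ * s * t * U t j
    rw [U_apply, ← mul_div_assoc, ← hco j, mul_div_cancel_right₀ _ (sub_ne_zero.2 (hns j))]
  refine ⟨t, htpos, hns, ?_, _, hfa⟩
  have hs0 : s ≠ 0 := by
    intro h; apply hf; rw [hfa, h]; simp
  have h1 : s = c⁻¹ * s * t * inner ℝ (U 0) (U t) := by
    conv_lhs => rw [hs, hfa]
    rw [real_inner_smul_right]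
  have h2 := inner_U (nonsquare_of_nonpos le_rfl) hns
  rw [m_zero] at h2
  have hc' := hc.ne'
  field_simp at h1
  linarith

/-! ### Values of `m` and of the norms -/

lemma sq_le_or_le_sq (n j : ℕ) :
    ((j : ℝ) + 1) ^ 2 ≤ (n : ℝ) ^ 2 ∨ ((n : ℝ) + 1) ^ 2 ≤ ((j : ℝ) + 1) ^ 2 := by
  rcases Nat.lt_or_ge j n with hj | hj
  · left
    have : ((j : ℝ) + 1) ≤ n := by exact_mod_cast hj
    gcongr
  · right
    gcongr

lemma nonsquare_of_between {y : ℝ} (n : ℕ) (h1 : (n : ℝ) ^ 2 < y)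
    (h2 : y < ((n : ℝ) + 1) ^ 2) : Nonsquare y := by
  intro j hj
  rcases sq_le_or_le_sq n j with h3 | h3 <;> linarith

/-- Between two consecutive squares `m` is injective, since there all the terms of
`⟪U s, U t⟫ = ∑ₖ k² / ((s - k²) (t - k²))` are positive. -/
lemma eq_of_m_eq {s t : ℝ} (n : ℕ) (hs : (n : ℝ) ^ 2 < s) (hs' : s < ((n : ℝ) + 1) ^ 2)
    (ht : (n : ℝ) ^ 2 < t) (ht' : t < ((n : ℝ) + 1) ^ 2) (h : m s = m t) : s = t := by
  have hpos : 0 < inner ℝ (U s) (U t) := by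
    have hsum := hasSum_inner s t
    have hp : ∀ j : ℕ, 0 < ((j : ℝ) + 1) ^ 2 /
        ((s - ((j : ℝ) + 1) ^ 2) * (t - ((j : ℝ) + 1) ^ 2)) := by
      intro j
      refine div_pos (by positivity) ?_
      rcases sq_le_or_le_sq n j with h3 | h3
      · exact mul_pos (by linarith) (by linarith)
      · exact mul_pos_of_neg_of_neg (by linarith) (by linarith)
    rw [← hsum.tsum_eq]
    exact hsum.summable.tsum_pos (fun i => (hp i).le) 0 (hp 0)
  have h1 := inner_U (nonsquare_of_between n hs hs') (nonsquare_of_between n ht ht')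
  rw [h, sub_self] at h1
  have := (mul_eq_zero.1 h1).resolve_right hpos.ne'
  linarith

lemma m_sq_real {z : ℝ} (hz : Real.sin (Real.pi * z) ≠ 0) :
    1 + 2 * m (z ^ 2) = Real.pi * z * (Real.cos (Real.pi * z) / Real.sin (Real.pi * z)) := by
  have hmem : (z : ℂ) ∈ Complex.integerComplement := by
    rintro ⟨n, hn⟩
    apply hz
    have : z = n := by exact_mod_cast hn.symm
    rw [this, mul_comm, Real.sin_int_mul_pi]
  have h := cot_eq_m hmem (t := z ^ 2) (by push_cast; rfl)
  rw [Complex.cot, ← Complex.ofReal_mul, ← Complex.ofReal_cos, ← Complex.ofReal_sin] at h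
  exact_mod_cast h.symm

lemma m_neg_sq {x : ℝ} (hx : 0 < x) :
    1 + 2 * m (-x ^ 2) = Real.pi * x * (Real.cosh (Real.pi * x) / Real.sinh (Real.pi * x)) := by
  have hmem : (x : ℂ) * Complex.I ∈ Complex.integerComplement := by
    rintro ⟨n, hn⟩
    have := congrArg Complex.im hn
    simp at this
    exact hx.ne this
  have h := cot_eq_m hmem (t := -x ^ 2) (by push_cast; rw [mul_pow, Complex.I_sq]; ring)
  rw [Complex.cot, ← mul_assoc, ← Complex.ofReal_mul, Complex.cos_mul_I,
    Complex.sin_mul_I, ← Complex.ofReal_cosh, ← Complex.ofReal_sinh, mul_assoc,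
    ← mul_div_assoc, mul_comm Complex.I, mul_div_mul_right _ _ Complex.I_ne_zero] at h
  exact_mod_cast h.symm

lemma sinh_pi_pos {x : ℝ} (hx : 0 < x) : 0 < Real.sinh (Real.pi * x) :=
  Real.sinh_pos_iff.2 (by positivity)

lemma sin_cos_of_tan {p l : ℝ} (hp : 0 < p) (hl : 0 < l)
    (h : Real.tan (Real.pi * l) = -l / p) :
    Real.sin (Real.pi * l) = -(l / p) * Real.cos (Real.pi * l) ∧
      Real.cos (Real.pi * l) ≠ 0 ∧ Real.sin (Real.pi * l) ≠ 0 := by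
  have hne : -l / p ≠ 0 := div_ne_zero (neg_ne_zero.2 hl.ne') hp.ne'
  rw [Real.tan_eq_sin_div_cos] at h
  -- `cos = 0` would give the junk value `tan = 0`
  have hc : Real.cos (Real.pi * l) ≠ 0 := fun h0 => by
    rw [h0, div_zero] at h; exact hne h.symm
  have hs : Real.sin (Real.pi * l) ≠ 0 := fun h0 => by
    rw [h0, zero_div] at h; exact hne h.symm
  refine ⟨?_, hc, hs⟩
  rw [div_eq_iff hc] at h
  rw [h]; ring

lemma m_eq_of_tan {p l : ℝ} (hp : 0 < p) (hl : 0 < l)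
    (h : Real.tan (Real.pi * l) = -l / p) : m (l ^ 2) = -((Real.pi * p + 1) / 2) := by
  obtain ⟨h1, h2, h3⟩ := sin_cos_of_tan hp hl h
  have h4 := m_sq_real h3
  rw [h1] at h4
  have : Real.pi * l * (Real.cos (Real.pi * l) / (-(l / p) * Real.cos (Real.pi * l)))
      = - (Real.pi * p) := by field_simp
  rw [this] at h4
  linarith

/-- Differentiating `1 + 2 m(z²) = π z cot (π z)` at a root `l` of `tan (π l) = -l / p` evaluates
`‖U (l²)‖²`, the negative of the derivative of `m` at `l²`. -/
lemma norm_U_of_tan {p l : ℝ} (hp : 0 < p) (hl : 0 < l) (hns : Nonsquare (l ^ 2))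
    (h : Real.tan (Real.pi * l) = -l / p) :
    ‖U (l ^ 2)‖ ^ 2 = Real.pi * (p + Real.pi * (p ^ 2 + l ^ 2)) / (4 * l ^ 2) := by
  obtain ⟨h1, h2, h3⟩ := sin_cos_of_tan hp hl h
  have hd1 : HasDerivAt (fun z : ℝ => 1 + 2 * m (z ^ 2)) (2 * (-‖U (l ^ 2)‖ ^ 2 * (2 * l))) l := by
    have h5 : HasDerivAt (fun z : ℝ => z ^ 2) (2 * l) l := by simpa using hasDerivAt_pow 2 l
    exact ((HasDerivAt.comp (h₂ := m) (h := fun z : ℝ => z ^ 2) l (hasDerivAt_m hns)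
      h5).const_mul 2).const_add 1
  have hlin : HasDerivAt (fun z : ℝ => Real.pi * z) Real.pi l := by
    simpa using (hasDerivAt_id l).const_mul Real.pi
  have hd2 := hlin.mul (hlin.cos.div hlin.sin h3)
  have hev : (fun z : ℝ => 1 + 2 * m (z ^ 2)) =ᶠ[𝓝 l]
      ((fun z : ℝ => Real.pi * z) *
        ((fun z => Real.cos (Real.pi * z)) / (fun z => Real.sin (Real.pi * z)))) := by
    have hcont : ContinuousAt (fun z : ℝ => Real.sin (Real.pi * z)) l := by fun_prop
    filter_upwards [hcont.eventually_ne h3] with z hz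
    exact m_sq_real hz
  have h6 := hd1.unique (hd2.congr_of_eventuallyEq hev)
  simp only [Pi.div_apply] at h6
  rw [h1] at h6
  generalize Real.cos (Real.pi * l) = C at h6 h2
  have h7 : Real.pi * (C / (-(l / p) * C)) + Real.pi * l *
      ((-(-(l / p) * C) * Real.pi * (-(l / p) * C) - C * (C * Real.pi)) / (-(l / p) * C) ^ 2)
      = -(Real.pi * p / l) - Real.pi ^ 2 * (p ^ 2 + l ^ 2) / l := by
    have h8 : (-(-(l / p) * C) * Real.pi * (-(l / p) * C) - C * (C * Real.pi)) / (-(l / p) * C) ^ 2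
      = -Real.pi * (p ^ 2 + l ^ 2) / l ^ 2 := by
      field_simp
      ring
    rw [h8]
    field_simp
    ring
  rw [h7] at h6
  field_simp at h6 ⊢
  linarith

/-! ### The eigenbasis and the Parseval identity -/

/-- `lam` is a Koshliakov sequence for `p`. -/
def IsKoshliakov (p : ℝ) (lam : ℕ → ℝ) : Prop :=
  ∀ n : ℕ, 1 ≤ n → (n : ℝ) - 1 / 2 < lam n ∧ lam n < n ∧
    Real.tan (Real.pi * lam n) = -(lam n) / p

section Sequence

variable {p : ℝ} {lam : ℕ → ℝ}

lemma IsKoshliakov.bounds (h : IsKoshliakov p lam) (n : ℕ) :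
    (n : ℝ) + 1 / 2 < lam (n + 1) ∧ lam (n + 1) < (n : ℝ) + 1 ∧ 0 < lam (n + 1) := by
  obtain ⟨h1, h2, -⟩ := h (n + 1) (Nat.le_add_left 1 n)
  push_cast at h1 h2
  have : (0 : ℝ) ≤ n := Nat.cast_nonneg n
  exact ⟨by linarith, h2, by linarith⟩

lemma IsKoshliakov.sq_bounds (h : IsKoshliakov p lam) (n : ℕ) :
    (n : ℝ) ^ 2 < lam (n + 1) ^ 2 ∧ lam (n + 1) ^ 2 < ((n : ℝ) + 1) ^ 2 := by
  obtain ⟨h1, h2, h3⟩ := h.bounds n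
  have : (0 : ℝ) ≤ n := Nat.cast_nonneg n
  constructor
  · gcongr; linarith
  · gcongr

lemma IsKoshliakov.nonsquare (h : IsKoshliakov p lam) (n : ℕ) : Nonsquare (lam (n + 1) ^ 2) :=
  nonsquare_of_between n (h.sq_bounds n).1 (h.sq_bounds n).2

lemma IsKoshliakov.m_eq (h : IsKoshliakov p lam) (hp : 0 < p) (n : ℕ) :
    m (lam (n + 1) ^ 2) = -((Real.pi * p + 1) / 2) :=
  m_eq_of_tan hp (h.bounds n).2.2 (h (n + 1) (Nat.le_add_left 1 n)).2.2

lemma IsKoshliakov.norm_sq (h : IsKoshliakov p lam) (hp : 0 < p) (n : ℕ) :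
    ‖U (lam (n + 1) ^ 2)‖ ^ 2 =
      Real.pi * (p + Real.pi * (p ^ 2 + lam (n + 1) ^ 2)) / (4 * lam (n + 1) ^ 2) :=
  norm_U_of_tan hp (h.bounds n).2.2 (h.nonsquare n) (h (n + 1) (Nat.le_add_left 1 n)).2.2

lemma IsKoshliakov.norm_ne_zero (h : IsKoshliakov p lam) (hp : 0 < p) (n : ℕ) :
    ‖U (lam (n + 1) ^ 2)‖ ≠ 0 := by
  intro h0
  have h1 := h.norm_sq hp n
  have h2 := (h.bounds n).2.2
  have h3 : 0 < Real.pi * (p + Real.pi * (p ^ 2 + lam (n + 1) ^ 2)) / (4 * lam (n + 1) ^ 2) := by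
    positivity
  rw [h0] at h1
  norm_num at h1
  linarith

/-- The normalised eigenvectors `U (λ²) / ‖U (λ²)‖` of `T c`, `c = (π p + 1) / 2`, where
`λ = lam (n + 1)`. -/
def B (lam : ℕ → ℝ) (n : ℕ) : H := ‖U (lam (n + 1) ^ 2)‖⁻¹ • U (lam (n + 1) ^ 2)

lemma IsKoshliakov.orthonormal (h : IsKoshliakov p lam) (hp : 0 < p) : Orthonormal ℝ (B lam) := by
  constructor
  · intro n
    rw [B, norm_smul, norm_inv, norm_norm, inv_mul_cancel₀ (h.norm_ne_zero hp n)]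
  · intro i j hij
    have h1 := inner_U (h.nonsquare i) (h.nonsquare j)
    rw [h.m_eq hp i, h.m_eq hp j, sub_self] at h1
    have hne : lam (i + 1) ^ 2 - lam (j + 1) ^ 2 ≠ 0 := by
      intro h0
      have hi := h.sq_bounds i
      have hj := h.sq_bounds j
      rcases Nat.lt_or_gt_of_ne hij with hlt | hlt
      · have : ((i : ℝ) + 1) ^ 2 ≤ (j : ℝ) ^ 2 := by
          have : ((i : ℝ) + 1) ≤ j := by exact_mod_cast hlt
          gcongr
        linarith
      · have : ((j : ℝ) + 1) ^ 2 ≤ (i : ℝ) ^ 2 := by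
          have : ((j : ℝ) + 1) ≤ i := by exact_mod_cast hlt
          gcongr
        linarith
    have h2 := (mul_eq_zero.1 h1).resolve_left hne
    simp only [B, real_inner_smul_left, real_inner_smul_right, h2, mul_zero]

/-- Completeness of the normalised vectors `U (λₙ²)`: up to scalars they exhaust the eigenvectors
of the compact symmetric operator `T c`, `c = (π p + 1) / 2`. -/
lemma IsKoshliakov.orthogonal_eq_bot (h : IsKoshliakov p lam) (hp : 0 < p) :
    (Submodule.span ℝ (Set.range (B lam)))ᗮ = ⊥ := by
  set c : ℝ := (Real.pi * p + 1) / 2 with hc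
  have hcpos : 0 < c := by positivity
  have hspec := ContinuousLinearMap.orthogonalComplement_iSup_eigenspaces_eq_bot
    (isCompact_T c) (isSymmetric_T c)
  rw [eq_bot_iff, ← hspec]
  refine Submodule.orthogonal_le (iSup_le fun ν f hf => ?_)
  rw [Module.End.mem_eigenspace_iff] at hf
  by_cases hf0 : f = 0
  · rw [hf0]; exact Submodule.zero_mem _
  obtain ⟨t, ht, hns, hm, a, rfl⟩ := eigenvector_T hcpos hf0 hf
  -- `n` is the integer part of `√t`
  obtain ⟨n, hn1, hn2⟩ : ∃ n : ℕ, (n : ℝ) ^ 2 < t ∧ t < ((n : ℝ) + 1) ^ 2 := by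
    have hsq := Real.sq_sqrt ht.le
    refine ⟨⌊√t⌋₊, lt_of_le_of_ne ?_ ?_, ?_⟩
    · rw [← hsq, Real.sqrt_sq (Real.sqrt_nonneg t)]
      have := Nat.floor_le (Real.sqrt_nonneg t)
      gcongr
    · intro h0
      rcases Nat.eq_zero_or_pos ⌊√t⌋₊ with h1 | h1
      · rw [h1] at h0; norm_num at h0; linarith
      · obtain ⟨j, hj⟩ := Nat.exists_eq_succ_of_ne_zero h1.ne'
        apply hns j
        rw [← h0, hj]; push_cast; ring
    · have := Nat.lt_floor_add_one √t
      calc t = √t ^ 2 := hsq.symm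
        _ < _ := by gcongr
  have heq : t = lam (n + 1) ^ 2 :=
    eq_of_m_eq n hn1 hn2 (h.sq_bounds n).1 (h.sq_bounds n).2 (by rw [hm, h.m_eq hp n])
  have hB : U t = ‖U (lam (n + 1) ^ 2)‖ • B lam n := by
    rw [B, smul_smul, mul_inv_cancel₀ (h.norm_ne_zero hp n), one_smul, heq]
  rw [hB]
  exact Submodule.smul_mem _ _ (Submodule.smul_mem _ _ (Submodule.subset_span ⟨n, rfl⟩))

/-- The Parseval identity for `U (-x²)` and `U 0` in the eigenbasis. -/
lemma IsKoshliakov.hasSum_parseval (h : IsKoshliakov p lam) (hp : 0 < p) {x : ℝ} (hx : 0 < x) :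
    HasSum (fun n : ℕ => 1 / ((x ^ 2 + lam (n + 1) ^ 2) *
        (p * (p + 1 / Real.pi) + lam (n + 1) ^ 2)))
      (Real.pi * (Real.pi * (x * (Real.cosh (Real.pi * x) / Real.sinh (Real.pi * x))) - 1) /
        (2 * (Real.pi * p + 1) *
          (x * (Real.cosh (Real.pi * x) / Real.sinh (Real.pi * x)) + p) * x ^ 2)) := by
  have hpi := Real.pi_pos
  have hm := m_neg_sq hx
  have hy : 0 < x * (Real.cosh (Real.pi * x) / Real.sinh (Real.pi * x)) :=
    mul_pos hx (div_pos (Real.cosh_pos _) (sinh_pi_pos hx))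
  rw [mul_assoc] at hm
  set y : ℝ := x * (Real.cosh (Real.pi * x) / Real.sinh (Real.pi * x)) with hydef
  have hm' : m (-x ^ 2) = (Real.pi * y - 1) / 2 := by linarith
  have hx2 : Nonsquare (-x ^ 2) := nonsquare_of_nonpos (by nlinarith)
  have h0 : Nonsquare 0 := nonsquare_of_nonpos le_rfl
  have hP := (HilbertBasis.mkOfOrthogonalEqBot (h.orthonormal hp)
    (h.orthogonal_eq_bot hp)).hasSum_inner_mul_inner (U (-x ^ 2)) (U 0)
  rw [HilbertBasis.coe_mkOfOrthogonalEqBot] at hP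
  have hval : inner ℝ (U (-x ^ 2)) (U 0) = (Real.pi * y - 1) / 2 / x ^ 2 := by
    have h1 := inner_U hx2 h0
    rw [m_zero, hm'] at h1
    field_simp
    linarith
  have hterm : ∀ n : ℕ, inner ℝ (U (-x ^ 2)) (B lam n) * inner ℝ (B lam n) (U 0) =
      (Real.pi * p + 1) * (y + p) / Real.pi *
        (1 / ((x ^ 2 + lam (n + 1) ^ 2) * (p * (p + 1 / Real.pi) + lam (n + 1) ^ 2))) := by
    intro n
    have hl := (h.bounds n).2.2
    have h1 := inner_U hx2 (h.nonsquare n)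
    have h2 := inner_U (h.nonsquare n) h0
    rw [h.m_eq hp n, hm'] at h1
    rw [h.m_eq hp n, m_zero] at h2
    have hn := h.norm_sq hp n
    have h1' : inner ℝ (U (-x ^ 2)) (U (lam (n + 1) ^ 2)) =
        Real.pi * (y + p) / 2 / (x ^ 2 + lam (n + 1) ^ 2) := by
      rw [eq_div_iff (by positivity)]
      linarith
    have h2' : inner ℝ (U (lam (n + 1) ^ 2)) (U 0) =
        (Real.pi * p + 1) / 2 / lam (n + 1) ^ 2 := by
      rw [eq_div_iff (by positivity)]
      linarith
    rw [B, real_inner_smul_left, real_inner_smul_right, h1', h2']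
    generalize lam (n + 1) = l at *
    calc _ = (‖U (l ^ 2)‖ ^ 2)⁻¹ * (Real.pi * (y + p) / 2 / (x ^ 2 + l ^ 2) *
          ((Real.pi * p + 1) / 2 / l ^ 2)) := by ring
      _ = _ := by
        rw [hn]
        have e1 : p * (p + 1 / Real.pi) + l ^ 2 = (p + Real.pi * (p ^ 2 + l ^ 2)) / Real.pi := by
          field_simp; ring
        rw [e1]
        have : p + Real.pi * (p ^ 2 + l ^ 2) ≠ 0 := by positivity
        have : x ^ 2 + l ^ 2 ≠ 0 := by positivity
        field_simp
        norm_num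
  simp only [hterm, hval] at hP
  have hP' := hP.mul_left ((Real.pi * p + 1) * (y + p) / Real.pi)⁻¹
  have hne : (Real.pi * p + 1) * (y + p) / Real.pi ≠ 0 := by positivity
  simp only [inv_mul_cancel_left₀ hne] at hP'
  have hv : Real.pi * (Real.pi * y - 1) / (2 * (Real.pi * p + 1) * (y + p) * x ^ 2) =
      ((Real.pi * p + 1) * (y + p) / Real.pi)⁻¹ * ((Real.pi * y - 1) / 2 / x ^ 2) := by
    field_simp
  rw [hv]
  exact hP'

lemma IsKoshliakov.summable_inv (h : IsKoshliakov p lam) (hp : 0 < p) :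
    Summable fun n : ℕ => 1 / (p * (p + 1 / Real.pi) + lam (n + 1) ^ 2) := by
  have hpi := Real.pi_pos
  refine Summable.of_nonneg_of_le (fun n => by positivity) (fun n => ?_)
    (summable_inv_sq.mul_left 4)
  have h1 := (h.bounds n).1
  have hn : (0 : ℝ) ≤ n := Nat.cast_nonneg n
  have hq : 0 < p * (p + 1 / Real.pi) := by positivity
  have h2 : (((n : ℝ) + 1) / 2) ^ 2 ≤ lam (n + 1) ^ 2 := by gcongr; linarith
  calc _ ≤ 1 / ((((n : ℝ) + 1) / 2) ^ 2) := by gcongr; linarith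
    _ = _ := by field_simp; norm_num

/-- The limit `x → ∞` of `x²` times the Parseval identity. -/
lemma IsKoshliakov.hasSum_inv (h : IsKoshliakov p lam) (hp : 0 < p) :
    HasSum (fun n : ℕ => 1 / (p * (p + 1 / Real.pi) + lam (n + 1) ^ 2))
      (Real.pi ^ 2 / (2 * (Real.pi * p + 1))) := by
  have hpi := Real.pi_pos
  have hs := h.summable_inv hp
  have hlim1 : Tendsto (fun x : ℝ => ∑' n : ℕ, x ^ 2 * (1 / ((x ^ 2 + lam (n + 1) ^ 2) *
        (p * (p + 1 / Real.pi) + lam (n + 1) ^ 2)))) atTop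
      (𝓝 (∑' n : ℕ, 1 / (p * (p + 1 / Real.pi) + lam (n + 1) ^ 2))) := by
    refine tendsto_tsum_of_dominated_convergence hs (fun n => ?_) ?_
    · have hq : 0 < p * (p + 1 / Real.pi) + lam (n + 1) ^ 2 := by positivity
      have h1 : Tendsto (fun x : ℝ => lam (n + 1) ^ 2 / (x ^ 2 + lam (n + 1) ^ 2)) atTop (𝓝 0) :=
        tendsto_const_nhds.div_atTop
          (tendsto_atTop_add_const_right _ _ (tendsto_pow_atTop (by norm_num)))
      have h2 := (h1.const_sub 1).mul_const (1 / (p * (p + 1 / Real.pi) + lam (n + 1) ^ 2))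
      rw [sub_zero, one_mul] at h2
      refine h2.congr' ?_
      filter_upwards [eventually_gt_atTop 0] with x hx
      have : x ^ 2 + lam (n + 1) ^ 2 ≠ 0 := by positivity
      generalize p * (p + 1 / Real.pi) + lam (n + 1) ^ 2 = q at *
      field_simp
      ring
    · filter_upwards [eventually_gt_atTop 0] with x hx n
      have hq : 0 < p * (p + 1 / Real.pi) + lam (n + 1) ^ 2 := by positivity
      rw [Real.norm_eq_abs, abs_of_nonneg (by positivity)]
      generalize p * (p + 1 / Real.pi) + lam (n + 1) ^ 2 = q at *
      rw [mul_one_div, div_le_div_iff₀ (by positivity) hq]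
      nlinarith [mul_nonneg (sq_nonneg (lam (n + 1))) hq.le]
  have hY : Tendsto (fun x : ℝ => x * (Real.cosh (Real.pi * x) / Real.sinh (Real.pi * x)))
      atTop atTop := by
    refine tendsto_atTop_mono' _ ?_ tendsto_id
    filter_upwards [eventually_gt_atTop 0] with x hx
    have h1 : 1 ≤ Real.cosh (Real.pi * x) / Real.sinh (Real.pi * x) :=
      (one_le_div (sinh_pi_pos hx)).2 (Real.sinh_lt_cosh _).le
    exact le_mul_of_one_le_right hx.le h1
  have hlim2 : Tendsto (fun x : ℝ => ∑' n : ℕ, x ^ 2 * (1 / ((x ^ 2 + lam (n + 1) ^ 2) *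
        (p * (p + 1 / Real.pi) + lam (n + 1) ^ 2)))) atTop
      (𝓝 (Real.pi ^ 2 / (2 * (Real.pi * p + 1)))) := by
    have h1 : Tendsto (fun y : ℝ => Real.pi / (2 * (Real.pi * p + 1)) *
        (Real.pi - (Real.pi * p + 1) / (y + p))) atTop
        (𝓝 (Real.pi / (2 * (Real.pi * p + 1)) * (Real.pi - 0))) :=
      ((tendsto_const_nhds.div_atTop (tendsto_atTop_add_const_right _ _ tendsto_id)).const_sub
        _).const_mul _
    have h2 := h1.comp hY
    rw [sub_zero, div_mul_eq_mul_div, ← sq] at h2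
    refine h2.congr' ?_
    filter_upwards [eventually_gt_atTop 0] with x hx
    rw [((h.hasSum_parseval hp hx).mul_left (x ^ 2)).tsum_eq]
    have hy : 0 < x * (Real.cosh (Real.pi * x) / Real.sinh (Real.pi * x)) :=
      mul_pos hx (div_pos (Real.cosh_pos _) (sinh_pi_pos hx))
    simp only [Function.comp]
    generalize x * (Real.cosh (Real.pi * x) / Real.sinh (Real.pi * x)) = y at *
    field_simp
    ring
  rw [← tendsto_nhds_unique hlim1 hlim2]
  exact hs.hasSum

end Sequence

end

end Koshliakov

/-! ### The expansion -/

theorem koshliakov_partial_fraction_expansion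
    (p : ℝ) (hp : 0 < p) (lam : ℕ → ℝ)
    (hlam : ∀ n : ℕ, 1 ≤ n → (n : ℝ) - 1 / 2 < lam n ∧ lam n < n ∧
      Real.tan (Real.pi * lam n) = -(lam n) / p)
    (x : ℝ) (hx : 0 < x) (hxp : x ≠ p) :
    (∑' n : ℕ, (p ^ 2 + lam (n + 1) ^ 2) / (p * (p + 1 / Real.pi) + lam (n + 1) ^ 2) /
        (x ^ 2 + lam (n + 1) ^ 2)) =
      Real.pi / (2 * x) - 1 / (1 + 1 / (Real.pi * p)) * (1 / (2 * x ^ 2))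
      + Real.pi / x * (1 / ((p + x) / (p - x) * Real.exp (2 * Real.pi * x) - 1)) := by
  have h : Koshliakov.IsKoshliakov p lam := hlam
  have hpi := Real.pi_pos
  have hsum := (h.hasSum_inv hp).add ((h.hasSum_parseval hp hx).mul_left (p ^ 2 - x ^ 2))
  -- `p² + λ² = (x² + λ²) + (p² - x²)`
  have hterm : ∀ n : ℕ, (p ^ 2 + lam (n + 1) ^ 2) / (p * (p + 1 / Real.pi) + lam (n + 1) ^ 2) /
        (x ^ 2 + lam (n + 1) ^ 2) = 1 / (p * (p + 1 / Real.pi) + lam (n + 1) ^ 2) +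
        (p ^ 2 - x ^ 2) * (1 / ((x ^ 2 + lam (n + 1) ^ 2) *
          (p * (p + 1 / Real.pi) + lam (n + 1) ^ 2))) := by
    intro n
    have hq : 0 < p * (p + 1 / Real.pi) + lam (n + 1) ^ 2 := by positivity
    have : x ^ 2 + lam (n + 1) ^ 2 ≠ 0 := by positivity
    generalize p * (p + 1 / Real.pi) + lam (n + 1) ^ 2 = q at *
    field_simp
    ring
  rw [tsum_congr hterm, hsum.tsum_eq]
  have hE : 1 < Real.exp (Real.pi * x) := Real.one_lt_exp_iff.2 (by positivity)
  rw [show 2 * Real.pi * x = Real.pi * x + Real.pi * x by ring, Real.exp_add, Real.cosh_eq,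
    Real.sinh_eq, Real.exp_neg]
  generalize Real.exp (Real.pi * x) = E at *
  have hpx : p - x ≠ 0 := sub_ne_zero.2 hxp.symm
  have hE2 : 0 < E * E - 1 := by nlinarith
  have hcoth : (E + E⁻¹) / 2 / ((E - E⁻¹) / 2) = (E * E + 1) / (E * E - 1) := by
    have : E - E⁻¹ = (E * E - 1) / E := by field_simp
    rw [this]
    field_simp
  rw [hcoth]
  have hden : 0 < (p + x) * (E * E) - (p - x) := by nlinarith
  clear hcoth
  generalize E * E = F at *
  have h2 : F - 1 ≠ 0 := hE2.ne'
  obtain ⟨G, hG⟩ : ∃ G, G = (p + x) * F - (p - x) := ⟨_, rfl⟩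
  have hG0 : G ≠ 0 := hG ▸ hden.ne'
  have hfrac : 1 / ((p + x) / (p - x) * F - 1) = (p - x) / G := by
    have : (p + x) / (p - x) * F - 1 = G / (p - x) := by
      rw [hG]
      field_simp
    rw [this, one_div_div]
  have hy : x * ((F + 1) / (F - 1)) + p = G / (F - 1) := by
    rw [hG]
    field_simp
    ring
  have hw : 1 / (1 + 1 / (Real.pi * p)) = Real.pi * p / (Real.pi * p + 1) := by
    field_simp
  rw [hfrac, hy, hw]
  field_simp
  rw [hG]
  ring
end
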